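/- For every n > 1/δ and every γ ∈ Γ there is a ball B_γⁿ centered on the image of γ, of radius 1/n, satisfying H(S ∩ B_γⁿ) ≥ C n μ(B_γⁿ) for some constant C = C(T) depending only on the data of T. -/

import Mathlib

open MeasureTheory Metric Set Filter Topology
open scoped ENNReal NNReal unitInterval

noncomputable section

namespace Duality

/-! ### Rectifiable curves, line integrals and upper gradients

A rectifiable path is encoded by its arclength-type parametrization: a `1`-Lipschitz
map defined on a compact interval `[a, b]`.  The line integral `∫_γ ρ ds` of a
nonnegative Borel function is then the Lebesgue integral of `ρ ∘ γ` over `[a, b]`. -/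

structure UPath (X : Type*) [PseudoMetricSpace X] where
  a : ℝ
  b : ℝ
  hab : a ≤ b
  toFun : ℝ → X
  lip : LipschitzOnWith 1 toFun (Set.Icc a b)

namespace UPath

variable {X : Type*} [PseudoMetricSpace X]

/-- starting point of the path -/
def start (γ : UPath X) : X := γ.toFun γ.a

/-- end point of the path -/
def finish (γ : UPath X) : X := γ.toFun γ.b

/-- The line integral `∫_γ ρ ds`. -/
def integral (γ : UPath X) (ρ : X → ℝ≥0∞) : ℝ≥0∞ :=
  ∫⁻ t in Set.Icc γ.a γ.b, ρ (γ.toFun t)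

/-- The image (trace) `|γ|` of the path. -/
def trace (γ : UPath X) : Set X := γ.toFun '' Set.Icc γ.a γ.b

/-- The length of the path. -/
def length (γ : UPath X) : ℝ≥0∞ := eVariationOn γ.toFun (Set.Icc γ.a γ.b)

/-- The path stays inside the set `W`. -/
def InSet (γ : UPath X) (W : Set X) : Prop := ∀ t ∈ Set.Icc γ.a γ.b, γ.toFun t ∈ W

/-- The reparametrization of a rectifiable path as a `Path` (continuous map from `[0,1]`). -/
def toPath (γ : UPath X) : Path γ.start γ.finish where
  toFun := fun t => γ.toFun (γ.a + (t : ℝ) * (γ.b - γ.a))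
  continuous_toFun := by
    have hmem : ∀ t : unitInterval, γ.a + (t : ℝ) * (γ.b - γ.a) ∈ Set.Icc γ.a γ.b := by
      intro t
      obtain ⟨ht0, ht1⟩ := t.2
      constructor
      · nlinarith [γ.hab]
      · nlinarith [γ.hab]
    exact γ.lip.continuousOn.comp_continuous (by continuity) hmem
  source' := by simp [start]
  target' := by simp [finish]

end UPath

/-- `ρ` is an upper gradient of `u`. -/
def IsUpperGradient {X : Type*} [PseudoMetricSpace X] {Y : Type*} [PseudoEMetricSpace Y]
    (u : X → Y) (ρ : X → ℝ≥0∞) : Prop :=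
  ∀ γ : UPath X, edist (u γ.start) (u γ.finish) ≤ γ.integral ρ

/-- The `p`-modulus of a family of (rectifiable) paths. -/
def pathMod {X : Type*} [PseudoMetricSpace X] [MeasurableSpace X]
    (μ : Measure X) (p : ℝ) (Γ : Set (UPath X)) : ℝ≥0∞ :=
  ⨅ (ρ : X → ℝ≥0∞) (_ : Measurable ρ ∧ ∀ γ ∈ Γ, 1 ≤ γ.integral ρ),
    ∫⁻ x, ρ x ^ p ∂μ

/-- `ρ` is a `p`-weak upper gradient of `u`: the upper gradient inequality may fail
only on a path family of zero `p`-modulus. -/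
def IsWeakUpperGradient {X : Type*} [PseudoMetricSpace X] [MeasurableSpace X]
    {Y : Type*} [PseudoEMetricSpace Y] (μ : Measure X) (p : ℝ)
    (u : X → Y) (ρ : X → ℝ≥0∞) : Prop :=
  pathMod μ p {γ : UPath X | ¬ edist (u γ.start) (u γ.finish) ≤ γ.integral ρ} = 0

/-- `ρ` is a `p`-weak upper gradient of `u` in the subset `U`. -/
def IsWeakUpperGradientOn {X : Type*} [PseudoMetricSpace X] [MeasurableSpace X]
    {Y : Type*} [PseudoEMetricSpace Y] (μ : Measure X) (p : ℝ) (U : Set X)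
    (u : X → Y) (ρ : X → ℝ≥0∞) : Prop :=
  pathMod (μ.restrict U) p
    {γ : UPath X | γ.InSet U ∧ ¬ edist (u γ.start) (u γ.finish) ≤ γ.integral ρ} = 0

/-- `ρ` is the minimal `p`-weak upper gradient of `u`: it is a `p`-integrable `p`-weak
upper gradient which is `μ`-a.e. dominated by every other one. -/
def IsMinimalWeakUpperGradient {X : Type*} [PseudoMetricSpace X] [MeasurableSpace X]
    {Y : Type*} [PseudoEMetricSpace Y] (μ : Measure X) (p : ℝ)
    (u : X → Y) (ρ : X → ℝ≥0∞) : Prop :=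
  Measurable ρ ∧ IsWeakUpperGradient μ p u ρ ∧ (∫⁻ x, ρ x ^ p ∂μ) < ⊤ ∧
    ∀ ρ' : X → ℝ≥0∞, Measurable ρ' → IsWeakUpperGradient μ p u ρ' →
      (∫⁻ x, ρ' x ^ p ∂μ) < ⊤ → ∀ᵐ x ∂μ, ρ x ≤ ρ' x

/-! ### Doubling measures, Poincaré inequalities, Ahlfors regularity -/

/-- `μ` is a doubling (Borel) measure with doubling constant `Cμ`:
`0 < μ(2B) ≤ Cμ · μ(B) < ∞` for every ball `B` of radius `r < diam T`. -/
def IsDoubling {X : Type*} [MetricSpace X] [MeasurableSpace X]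
    (μ : Measure X) (Cμ : ℝ≥0∞) : Prop :=
  ∀ (x : X) (r : ℝ), 0 < r → r < Metric.diam (Set.univ : Set X) →
    0 < μ (ball x (2 * r)) ∧ μ (ball x (2 * r)) ≤ Cμ * μ (ball x r) ∧
      Cμ * μ (ball x r) < ⊤

/-- `(X, d, μ)` supports a weak `1`-Poincaré inequality with constants `CP`, `lP`:
`⨍_B |u - u_B| dμ ≤ CP · diam B · ⨍_{lP·B} ρ dμ` for every locally integrable `u`
and every upper gradient `ρ` of `u`, and balls have positive finite measure. -/
def SupportsPoincare {X : Type*} [MetricSpace X] [MeasurableSpace X]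
    (μ : Measure X) (CP lP : ℝ) : Prop :=
  (∀ (x : X) (r : ℝ), 0 < r → 0 < μ (ball x r) ∧ μ (ball x r) < ⊤) ∧
  ∀ (u : X → ℝ) (ρ : X → ℝ≥0∞), LocallyIntegrable u μ → Measurable ρ →
    IsUpperGradient u ρ → ∀ (x : X) (r : ℝ), 0 < r →
      (∫⁻ y in ball x r, ENNReal.ofReal |u y - ⨍ z in ball x r, u z ∂μ| ∂μ) /
          μ (ball x r) ≤
        ENNReal.ofReal (CP * Metric.diam (ball x r)) *
          ((∫⁻ y in ball x (lP * r), ρ y ∂μ) / μ (ball x (lP * r)))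

/-- `μ` is Ahlfors `q`-regular with constants `0 < aA ≤ AA`. -/
def IsAhlforsRegular {X : Type*} [MetricSpace X] [MeasurableSpace X]
    (μ : Measure X) (q aA AA : ℝ) : Prop :=
  0 < aA ∧ aA ≤ AA ∧
    ∀ (x : X) (r : ℝ), 0 < r → r < Metric.diam (Set.univ : Set X) →
      ENNReal.ofReal (aA * r ^ q) ≤ μ (ball x r) ∧
        μ (ball x r) ≤ ENNReal.ofReal (AA * r ^ q)

/-! ### The circle `ℝ/ℤ`, loops and degree -/

lemma intCast_coe_eq_zero (k : ℤ) : ((k : ℝ) : UnitAddCircle) = 0 :=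
  (AddCircle.coe_eq_zero_iff _).mpr ⟨k, by simp⟩

/-- The standard loop of degree `k` in `ℝ/ℤ` based at `y`: `t ↦ y + [k t]`. -/
def stdLoop (k : ℤ) (y : UnitAddCircle) : Path y y where
  toFun := fun t => y + (((k : ℝ) * (t : ℝ) : ℝ) : UnitAddCircle)
  continuous_toFun := by
    refine continuous_const.add ?_
    exact (AddCircle.continuous_mk' 1).comp (by continuity)
  source' := by simp
  target' := by
    have h1 : ((1 : unitInterval) : ℝ) = 1 := rfl
    have h : (((k : ℝ) * ((1 : unitInterval) : ℝ) : ℝ) : UnitAddCircle) = 0 := by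
      rw [h1, mul_one]; exact intCast_coe_eq_zero k
    simp [h]

/-- Concatenation of `n` copies of a loop. -/
def loopPow {X : Type*} [TopologicalSpace X] {x : X} (γ : Path x x) : ℕ → Path x x
  | 0 => Path.refl x
  | n + 1 => (loopPow γ n).trans γ

/-- A loop `γ` based at `x` has degree 1 (relative to the chosen generator `α₀` based
at `x₀`) if it is loop-homotopic to a conjugate `η * α₀ * η⁻¹` of `α₀`. -/
def IsDegreeOneLoop {T : Type*} [TopologicalSpace T] (x₀ : T) (α₀ : Path x₀ x₀)
    {x : T} (γ : Path x x) : Prop :=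
  ∃ η : Path x x₀, Path.Homotopic γ (η.trans (α₀.trans η.symm))

/-- A map `f : T → ℝ/ℤ` has degree `k`: it pushes every degree-1 loop based at `x`
to a loop which is loop-homotopic to `[f x] + k·β`, `β (t) = [t]`. -/
def HasDegree {T : Type*} [TopologicalSpace T] (x₀ : T) (α₀ : Path x₀ x₀)
    (f : T → UnitAddCircle) (k : ℤ) : Prop :=
  ∃ hf : Continuous f, ∀ (x : T) (γ : Path x x), IsDegreeOneLoop x₀ α₀ γ →
    Path.Homotopic (γ.map hf) (stdLoop k (f x))

/-- The class of `α₀` generates `π₁(T, x₀) ≅ ℤ`. -/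
def IsGenerator {T : Type*} [TopologicalSpace T] (x₀ : T) (α₀ : Path x₀ x₀) : Prop :=
  Function.Bijective fun k : ℤ =>
    (FundamentalGroup.fromPath (X := TopCat.of T) ⟦α₀⟧ : FundamentalGroup (TopCat.of T) x₀) ^ k

/-- `T` is semilocally simply connected. -/
def SemilocallySimplyConnected (T : Type*) [TopologicalSpace T] : Prop :=
  ∀ x : T, ∃ U ∈ 𝓝 x, ∀ γ : Path x x, (∀ t, γ t ∈ U) → Path.Homotopic γ (Path.refl x)

/-- `f` is a Lipschitz map of degree 1. -/
def DegOneLip {T : Type*} [MetricSpace T] (x₀ : T) (α₀ : Path x₀ x₀)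
    (f : T → UnitAddCircle) : Prop :=
  (∃ L : ℝ≥0, LipschitzWith L f) ∧ HasDegree x₀ α₀ f 1

/-! ### Capacity and surface modulus -/

/-- The degree 1 `p`-capacity of `T`, defined through minimal `p`-weak upper gradients:
the infimum of `∫ ρ^p dμ` over `p`-weak upper gradients `ρ` of Lipschitz degree-1 maps. -/
def cap {T : Type*} [MetricSpace T] [MeasurableSpace T] (μ : Measure T) (p : ℝ)
    (x₀ : T) (α₀ : Path x₀ x₀) : ℝ≥0∞ :=
  ⨅ (f : T → UnitAddCircle) (_ : DegOneLip x₀ α₀ f) (ρ : T → ℝ≥0∞)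
    (_ : Measurable ρ ∧ IsWeakUpperGradient μ p f ρ),
      ∫⁻ x, ρ x ^ p ∂μ

/-- The pointwise Lipschitz constant `Lip f (x)`. -/
def pLip {T : Type*} [MetricSpace T] (f : T → UnitAddCircle) (x : T) : ℝ≥0∞ :=
  Filter.limsup
    (fun r : ℝ => ⨆ y ∈ ball x r, edist (f x) (f y) / ENNReal.ofReal r) (𝓝[>] (0 : ℝ))

/-- The degree 1 `p`-capacity of `T`, defined through pointwise Lipschitz constants. -/
def capLip {T : Type*} [MetricSpace T] [MeasurableSpace T] (μ : Measure T) (p : ℝ)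
    (x₀ : T) (α₀ : Path x₀ x₀) : ℝ≥0∞ :=
  ⨅ (f : T → UnitAddCircle) (_ : DegOneLip x₀ α₀ f), ∫⁻ x, pLip f x ^ p ∂μ

/-- The codimension 1 spherical Hausdorff measure, as a set function:
`H(A) = sup_{δ>0} inf { ∑ μ(B_i)/r_i }`, the infimum being over countable covers of `A`
by balls `B_i` of radii `r_i ≤ δ`. -/
def codimH {T : Type*} [MetricSpace T] [MeasurableSpace T] (μ : Measure T)
    (A : Set T) : ℝ≥0∞ :=
  ⨆ (δ : ℝ) (_ : 0 < δ),
    ⨅ (c : ℕ → T) (r : ℕ → ℝ) (_ : ∀ i, r i ≤ δ)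
      (_ : A ⊆ ⋃ i, ball (c i) (r i)),
        ∑' i, μ (ball (c i) (r i)) / ENNReal.ofReal (r i)

/-- The integral `∫_S g dH` of `g ≥ 0` over `S` against the codimension 1 Hausdorff
measure, via the layer-cake (Choquet) formula. -/
def choquetIntegral {T : Type*} [MetricSpace T] [MeasurableSpace T] (μ : Measure T)
    (S : Set T) (g : T → ℝ≥0∞) : ℝ≥0∞ :=
  ∫⁻ t in Set.Ioi (0 : ℝ), codimH μ {x | x ∈ S ∧ ENNReal.ofReal t < g x}

/-- The family `Γ*` of all level sets `φ⁻¹[0]` of finite codimension 1 Hausdorff measure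
of continuous degree-1 maps `φ : T → ℝ/ℤ`. -/
def Surfaces {T : Type*} [MetricSpace T] [MeasurableSpace T] (μ : Measure T)
    (x₀ : T) (α₀ : Path x₀ x₀) : Set (Set T) :=
  {S | ∃ φ : T → UnitAddCircle, HasDegree x₀ α₀ φ 1 ∧ S = φ ⁻¹' {0} ∧ codimH μ S < ⊤}

/-- The surface `q`-modulus of a family of surfaces, the surfaces being equipped with the
codimension 1 Hausdorff measure. -/
def surfModOf {T : Type*} [MetricSpace T] [MeasurableSpace T] (μ : Measure T) (q : ℝ)
    (𝒮 : Set (Set T)) : ℝ≥0∞ :=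
  ⨅ (ρ : T → ℝ≥0∞) (_ : Measurable ρ ∧ ∀ S ∈ 𝒮, 1 ≤ choquetIntegral μ S ρ),
    ∫⁻ x, ρ x ^ q ∂μ

/-- The surface modulus `mod_q T`. -/
def surfMod {T : Type*} [MetricSpace T] [MeasurableSpace T] (μ : Measure T) (q : ℝ)
    (x₀ : T) (α₀ : Path x₀ x₀) : ℝ≥0∞ :=
  surfModOf μ q (Surfaces μ x₀ α₀)

/-- The family `Γ*` with the `(q-1)`-dimensional Hausdorff measure instead. -/
def SurfacesH {T : Type*} [MetricSpace T] [MeasurableSpace T] [BorelSpace T] (q : ℝ)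
    (x₀ : T) (α₀ : Path x₀ x₀) : Set (Set T) :=
  {S | ∃ φ : T → UnitAddCircle, HasDegree x₀ α₀ φ 1 ∧ S = φ ⁻¹' {0} ∧ μH[q - 1] S < ⊤}

/-- The surface modulus `mod_q T` defined through the `(q-1)`-dimensional Hausdorff
measures `H^{q-1} ⌞ S`, `S ∈ Γ*`. -/
def surfModH {T : Type*} [MetricSpace T] [MeasurableSpace T] [BorelSpace T]
    (μ : Measure T) (q pstar : ℝ) (x₀ : T) (α₀ : Path x₀ x₀) : ℝ≥0∞ :=
  ⨅ (ρ : T → ℝ≥0∞)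
    (_ : Measurable ρ ∧ ∀ S ∈ SurfacesH (T := T) q x₀ α₀, 1 ≤ ∫⁻ x in S, ρ x ∂μH[q - 1]),
      ∫⁻ x, ρ x ^ pstar ∂μ

/-- The standing assumptions 2.1. -/
def Standing {T : Type*} [MetricSpace T] [MeasurableSpace T] (μ : Measure T)
    (Cμ : ℝ≥0∞) (CP lP : ℝ) (x₀ : T) (α₀ : Path x₀ x₀) : Prop :=
  IsDoubling μ Cμ ∧ SupportsPoincare μ CP lP ∧ SemilocallySimplyConnected T ∧
    IsGenerator x₀ α₀ ∧ ∃ f : T → UnitAddCircle, DegOneLip x₀ α₀ f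

/-! ### The universal cover -/

/-- `π` is a local isometry. -/
def IsLocalIsometry {X Y : Type*} [MetricSpace X] [MetricSpace Y] (π : X → Y) : Prop :=
  ∀ x : X, ∃ ε : ℝ, 0 < ε ∧
    ∀ y ∈ ball x ε, ∀ z ∈ ball x ε, dist (π y) (π z) = dist y z

/-- `(T̃, π)` is the universal cover of `T`, with `T̃` carrying the length metric pulled
back by `π` (so that `π` is a local isometry). -/
def CoverSetup {T Tt : Type*} [MetricSpace T] [MetricSpace Tt] (π : Tt → T) : Prop :=
  IsCoveringMap π ∧ Function.Surjective π ∧ IsLocalIsometry π ∧ SimplyConnectedSpace Tt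

/-- `τ` is the deck transformation of the cover `π` determined by
`τ (γ̃ 0) = γ̃ 1` for every lift `γ̃` of every degree-1 loop `γ`. -/
def IsDeck {T Tt : Type*} [MetricSpace T] [MetricSpace Tt] (π : Tt → T)
    (x₀ : T) (α₀ : Path x₀ x₀) (τ : Tt → Tt) : Prop :=
  Continuous τ ∧ (∀ x, π (τ x) = π x) ∧
    ∀ (x : T) (γ : Path x x), IsDegreeOneLoop x₀ α₀ γ →
      ∀ γt : C(unitInterval, Tt), (∀ t, π (γt t) = γ t) → τ (γt 0) = γt 1

/-- `μ̃` is the natural lift of `μ` to the cover: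
`μ̃ (A) = ∫ #(π⁻¹(x) ∩ A) dμ (x)`. -/
def IsLiftedMeasure {T Tt : Type*} [MetricSpace T] [MeasurableSpace T]
    [MetricSpace Tt] [MeasurableSpace Tt] (π : Tt → T) (μ : Measure T)
    (μt : Measure Tt) : Prop :=
  ∀ A : Set Tt, MeasurableSet A → μt A = ∫⁻ x, ((π ⁻¹' {x} ∩ A).encard : ℝ≥0∞) ∂μ

/-! ### Newtonian spaces -/

/-- The seminorm of `N^{1,p}(U)`. -/
def NSeminorm {X : Type*} [PseudoMetricSpace X] [MeasurableSpace X] (μ : Measure X)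
    (p : ℝ) (U : Set X) (f : X → ℝ) : ℝ≥0∞ :=
  (∫⁻ x in U, ENNReal.ofReal |f x| ^ p ∂μ) ^ (1 / p) +
    ⨅ (ρ : X → ℝ≥0∞) (_ : Measurable ρ ∧ IsWeakUpperGradientOn μ p U f ρ),
      (∫⁻ x in U, ρ x ^ p ∂μ) ^ (1 / p)

/-- `f ∈ N^{1,p}_loc`. -/
def MemNloc {X : Type*} [PseudoMetricSpace X] [MeasurableSpace X] (μ : Measure X)
    (p : ℝ) (f : X → ℝ) : Prop :=
  ∀ U : Set X, IsOpen U → IsCompact (closure U) →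
    (∫⁻ x in U, ENNReal.ofReal |f x| ^ p ∂μ) < ⊤ ∧
      ∃ ρ : X → ℝ≥0∞, Measurable ρ ∧ IsWeakUpperGradientOn μ p U f ρ ∧
        (∫⁻ x in U, ρ x ^ p ∂μ) < ⊤

/-- The collection `F`: nonnegative Borel functions `ρ` on `T` such that `ρ ∘ π` is a
`p`-weak upper gradient of some `f ∈ N^{1,p}_loc (T̃)` with `f ∘ τ - f = 1` a.e. -/
def MemF {T Tt : Type*} [MetricSpace T] [MeasurableSpace T] [MetricSpace Tt]
    [MeasurableSpace Tt] (π : Tt → T) (τ : Tt → Tt) (μt : Measure Tt) (p : ℝ)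
    (ρ : T → ℝ≥0∞) : Prop :=
  Measurable ρ ∧ ∃ f : Tt → ℝ, MemNloc μt p f ∧ (∀ᵐ x ∂μt, f (τ x) - f x = 1) ∧
    IsWeakUpperGradient μt p f (ρ ∘ π)

/-- The capacity `cap_p^F T`. -/
def capF {T Tt : Type*} [MetricSpace T] [MeasurableSpace T] [MetricSpace Tt]
    [MeasurableSpace Tt] (μ : Measure T) (π : Tt → T) (τ : Tt → Tt) (μt : Measure Tt)
    (p : ℝ) : ℝ≥0∞ :=
  ⨅ (ρ : T → ℝ≥0∞) (_ : MemF π τ μt p ρ), ∫⁻ x, ρ x ^ p ∂μ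

/-! ### Miscellaneous operators -/

/-- The restricted Hardy–Littlewood maximal operator `M_R`. -/
def restrMax {T : Type*} [MetricSpace T] [MeasurableSpace T] (μ : Measure T)
    (R : ℝ≥0∞) (g : T → ℝ≥0∞) (x : T) : ℝ≥0∞ :=
  ⨆ (s : ℝ) (_ : 0 < s ∧ ENNReal.ofReal s ≤ R),
    (∫⁻ y in ball x s, g y ∂μ) / μ (ball x s)

/-- The upper Lebesgue integral. -/
def upperLintegral {Y : Type*} [MeasurableSpace Y] (ν : Measure Y)
    (F : Y → ℝ≥0∞) : ℝ≥0∞ :=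
  ⨅ (G : Y → ℝ≥0∞) (_ : Measurable G ∧ ∀ y, F y ≤ G y), ∫⁻ y, G y ∂ν

/-! ### The sets `Ω` and the functions `ψ̃`, `ζ`, `ψ` of Section 4.3 -/

/-- The set of points reachable from `A` by a rectifiable path inside `W`. -/
def reach {T : Type*} [MetricSpace T] (A W : Set T) : Set T :=
  {x | ∃ γ : UPath T, γ.start ∈ A ∧ γ.finish = x ∧ γ.InSet W}

/-- `inf_γ ∫_γ ρ ds` over rectifiable paths connecting `A` to `x` inside `W`. -/
def pathDist {T : Type*} [MetricSpace T] (ρ : T → ℝ≥0∞) (A W : Set T) (x : T) : ℝ≥0∞ :=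
  ⨅ (γ : UPath T) (_ : γ.start ∈ A ∧ γ.finish = x ∧ γ.InSet W), γ.integral ρ

open scoped Classical in
/-- The function `ψ̃`. -/
def psiTilde {T : Type*} [MetricSpace T] (ρ : T → ℝ≥0∞) (A W : Set T) (x : T) : ℝ :=
  if x ∈ reach A W then (pathDist ρ A W x).toReal else 0

/-- The function `min {1, ψ̃}`. -/
def zeta {T : Type*} [MetricSpace T] (ρ : T → ℝ≥0∞) (A W : Set T) (x : T) : ℝ :=
  min 1 (psiTilde ρ A W x)

/-- The competing admissible map `ψ = [min {1, ψ̃}] : T → ℝ/ℤ`. -/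
def psiMap {T : Type*} [MetricSpace T] (ρ : T → ℝ≥0∞) (A W : Set T) (x : T) :
    UnitAddCircle :=
  ((zeta ρ A W x : ℝ) : UnitAddCircle)

end Duality

/-!
The competitors in the Poincaré inequality are the indicator functions of a set `A`, smoothed by the
cutoff functions of a cover, by small balls, of a set `S` separating `A` from its complement. This
gives a relative isoperimetric inequality: the smaller part into which `A` cuts a ball is bounded by
the codimension 1 Hausdorff measure of `S` in a dilated ball.

Take for `A` the part of `T` between the levels `0` and `1/4`. Near the start of a path of `Γ` balls
of a small radius `r` lie off `A`, near its end they lie in `A` up to null sets, so by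
connectedness and doubling `A` cuts some ball of radius `r` centered on the path into two comparable
parts. The isoperimetric inequality then bounds the measure of this ball by the measure of `S` in a
dilated ball, provided that the path stays away from the level `1/4`. A path of `Γ` may come close
to this level, but by the isoperimetric inequality its part between the levels `-1/8` and `1/8`
keeps a distance comparable to `1/n`: a ball around a point of level `±1/4` which avoids the levels
`±1/8` does not reach the set between them.
-/

namespace Duality

/-! ### Paths and upper gradients -/

lemma add_sub_mem_Icc_iff {a b t : ℝ} : a + b - t ∈ Icc a b ↔ t ∈ Icc a b := by
  rw [sub_mem_Icc_iff_right, add_sub_cancel_right, add_sub_cancel_left]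

namespace UPath

variable {X : Type*} [PseudoMetricSpace X]

lemma start_eq_finish {γ : UPath X} (h : γ.a = γ.b) : γ.start = γ.finish :=
  congrArg γ.toFun h

/-- The path run backwards, on the same parameter interval. -/
def reverse (γ : UPath X) : UPath X where
  a := γ.a
  b := γ.b
  hab := γ.hab
  toFun t := γ.toFun (γ.a + γ.b - t)
  lip := by
    intro s hs t ht
    simpa only [edist_sub_left] using
      γ.lip (add_sub_mem_Icc_iff.2 hs) (add_sub_mem_Icc_iff.2 ht)

lemma start_reverse (γ : UPath X) : γ.reverse.start = γ.finish := by
  simp [start, finish, reverse]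

lemma finish_reverse (γ : UPath X) : γ.reverse.finish = γ.start := by
  simp [start, finish, reverse]

lemma InSet.reverse {γ : UPath X} {W : Set X} (h : γ.InSet W) : γ.reverse.InSet W :=
  fun _ ht => h _ (add_sub_mem_Icc_iff.2 ht)

lemma integral_reverse (γ : UPath X) (ρ : X → ℝ≥0∞) :
    γ.reverse.integral ρ = γ.integral ρ := by
  unfold integral
  rw [← lintegral_indicator measurableSet_Icc, ← lintegral_indicator measurableSet_Icc,
    ← lintegral_sub_left_eq_self _ (γ.a + γ.b)]
  simp only [reverse, indicator_apply, add_sub_mem_Icc_iff, sub_sub_cancel]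

/-- The part of a path after the time `s`. -/
def tail (γ : UPath X) (s : ℝ) (hs : s ∈ Icc γ.a γ.b) : UPath X where
  a := s
  b := γ.b
  hab := hs.2
  toFun := γ.toFun
  lip := γ.lip.mono (Icc_subset_Icc_left hs.1)

lemma integral_tail_le (γ : UPath X) {s : ℝ} (hs : s ∈ Icc γ.a γ.b) (ρ : X → ℝ≥0∞) :
    (γ.tail s hs).integral ρ ≤ γ.integral ρ :=
  lintegral_mono_set (Icc_subset_Icc_left hs.1)

lemma toPath_mem_trace (γ : UPath X) (t : I) : γ.toPath t ∈ γ.trace := by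
  obtain ⟨t, ht₀, ht₁⟩ := t
  have hab := sub_nonneg.2 γ.hab
  refine mem_image_of_mem _ ⟨?_, ?_⟩ <;> simp only <;> nlinarith

lemma integral_indicator_top {γ : UPath X} (hab : γ.a < γ.b) {U : Set X}
    (h : ¬ γ.InSet (closure U)) : γ.integral (Uᶜ.indicator fun _ => ⊤) = ⊤ := by
  set V := Ioo γ.a γ.b ∩ γ.toFun ⁻¹' (closure U)ᶜ
  have hV : IsOpen V := (γ.lip.continuousOn.mono Ioo_subset_Icc_self).isOpen_inter_preimage
    isOpen_Ioo isClosed_closure.isOpen_compl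
  have hVne : V.Nonempty := by
    by_contra hempty
    have hmaps : MapsTo γ.toFun (Ioo γ.a γ.b) (closure U) := fun t ht => by
      by_contra hU
      exact hempty ⟨t, ht, hU⟩
    have hcont : ContinuousOn γ.toFun (closure (Ioo γ.a γ.b)) := by
      simpa only [closure_Ioo hab.ne] using γ.lip.continuousOn
    have := hmaps.closure_of_continuousOn hcont
    rw [closure_Ioo hab.ne, closure_closure] at this
    exact h this
  refine top_le_iff.1 ?_
  calc (⊤ : ℝ≥0∞) = ∫⁻ _ in V, ⊤ := by
        rw [setLIntegral_const, ENNReal.top_mul (hV.measure_pos volume hVne).ne']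
    _ = ∫⁻ t in V, Uᶜ.indicator (fun _ => ⊤) (γ.toFun t) :=
        setLIntegral_congr_fun hV.measurableSet fun t ht =>
          (indicator_of_mem (mt (@subset_closure _ _ U _) ht.2) fun _ => (⊤ : ℝ≥0∞)).symm
    _ ≤ γ.integral (Uᶜ.indicator fun _ => ⊤) :=
        lintegral_mono_set (inter_subset_left.trans Ioo_subset_Icc_self)

end UPath

section UpperGradient

variable {X Y : Type*} [PseudoMetricSpace X]

lemma IsUpperGradient.mono [PseudoEMetricSpace Y] {u : X → Y} {ρ ρ' : X → ℝ≥0∞}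
    (h : IsUpperGradient u ρ) (hρ : ∀ x, ρ x ≤ ρ' x) : IsUpperGradient u ρ' := fun γ =>
  (h γ).trans (lintegral_mono fun _ => hρ _)

lemma isUpperGradient_of_ofReal_sub_le {u : X → ℝ} {ρ : X → ℝ≥0∞}
    (h : ∀ γ : UPath X, ENNReal.ofReal (u γ.start - u γ.finish) ≤ γ.integral ρ) :
    IsUpperGradient u ρ := by
  intro γ
  have hrev := h γ.reverse
  rw [UPath.start_reverse, UPath.finish_reverse, UPath.integral_reverse] at hrev
  rw [edist_dist, Real.dist_eq, abs_eq_max_neg, neg_sub, ENNReal.ofReal_max]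
  exact max_le (h γ) hrev

lemma isUpperGradient_iSup {ι : Type*} [Nonempty ι] {u : ι → X → ℝ} {ρ : X → ℝ≥0∞}
    (h : ∀ i, IsUpperGradient (u i) ρ) (hbdd : ∀ x, BddAbove (range fun i => u i x)) :
    IsUpperGradient (fun x => ⨆ i, u i x) ρ := by
  refine isUpperGradient_of_ofReal_sub_le fun γ => ?_
  by_cases htop : γ.integral ρ = ⊤
  · simp [htop]
  rw [ENNReal.ofReal_le_iff_le_toReal htop, sub_le_iff_le_add]
  refine ciSup_le fun i => ?_
  have hi : u i γ.start - u i γ.finish ≤ (γ.integral ρ).toReal := by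
    refine (le_abs_self _).trans ?_
    rw [← Real.dist_eq, dist_edist]
    exact ENNReal.toReal_mono htop (h i γ)
  linarith [le_ciSup (hbdd γ.finish) i]

lemma isUpperGradient_indicator_of_lipschitzWith {u : X → ℝ} {K : ℝ≥0} (hu : LipschitzWith K u)
    {U : Set X} (hU : IsOpen U) (hzero : ∀ x ∉ U, u x = 0) :
    IsUpperGradient u (U.indicator fun _ => (K : ℝ≥0∞)) := by
  intro γ
  set E := γ.toFun ⁻¹' U ∩ Icc γ.a γ.b with hE_def
  have hE : MeasurableSet E := by
    obtain ⟨V, hV, hVE⟩ := continuousOn_iff'.1 γ.lip.continuousOn U hU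
    exact hE_def ▸ hVE ▸ hV.measurableSet.inter measurableSet_Icc
  have hlip : LipschitzOnWith K (u ∘ γ.toFun) (Icc γ.a γ.b) := by
    simpa only [mul_one] using hu.comp_lipschitzOnWith γ.lip
  have hsub : uIcc (u γ.start) (u γ.finish) ⊆ insert 0 (u ∘ γ.toFun '' E) := by
    have hcont : ContinuousOn (u ∘ γ.toFun) (uIcc γ.a γ.b) := by
      simpa only [uIcc_of_le γ.hab] using hlip.continuousOn
    refine (intermediate_value_uIcc hcont).trans ?_
    rw [uIcc_of_le γ.hab]
    rintro _ ⟨t, ht, rfl⟩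
    by_cases htU : γ.toFun t ∈ U
    · exact Or.inr ⟨t, ⟨htU, ht⟩, rfl⟩
    · exact Or.inl (hzero _ htU)
  calc edist (u γ.start) (u γ.finish)
      = volume (uIcc (u γ.start) (u γ.finish)) := by
        rw [Real.volume_interval, edist_comm, edist_dist, Real.dist_eq]
    _ ≤ volume (u ∘ γ.toFun '' E) :=
        (measure_mono hsub).trans_eq (measure_congr (insert_ae_eq_self _ _))
    _ ≤ K * volume E := by
        simpa only [hausdorffMeasure_real, ENNReal.rpow_one] using
          (hlip.mono inter_subset_right).hausdorffMeasure_image_le zero_le_one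
    _ = ∫⁻ t in E, U.indicator (fun _ => (K : ℝ≥0∞)) (γ.toFun t) := by
        rw [← setLIntegral_const]
        exact setLIntegral_congr_fun hE fun t ht => (indicator_of_mem ht.1 fun _ => _).symm
    _ ≤ γ.integral (U.indicator fun _ => (K : ℝ≥0∞)) := lintegral_mono_set inter_subset_right

lemma isUpperGradient_add_indicator_top [PseudoEMetricSpace Y] {u : X → Y} {ρ : X → ℝ≥0∞}
    {U : Set X}
    (h : ∀ γ : UPath X, γ.InSet (closure U) → edist (u γ.start) (u γ.finish) ≤ γ.integral ρ) :
    IsUpperGradient u fun x => ρ x + Uᶜ.indicator (fun _ => ⊤) x := by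
  intro γ
  rcases γ.hab.eq_or_lt with hab | hab
  · simp [UPath.start_eq_finish hab]
  by_cases hU : γ.InSet (closure U)
  · exact (h γ hU).trans (lintegral_mono fun _ => le_self_add)
  · refine le_top.trans ((UPath.integral_indicator_top hab hU).symm.trans_le ?_)
    exact lintegral_mono fun _ => le_add_self

/-- The set `S` separates `A` from its complement within `W`: every rectifiable path in `W` from a
point of `A` to a point outside `A` meets `S`. -/
def Separates (S A W : Set X) : Prop :=
  ∀ γ : UPath X, γ.InSet W → γ.start ∈ A → γ.finish ∉ A → (γ.trace ∩ S).Nonempty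

lemma Separates.edist_piecewise_le [PseudoEMetricSpace Y] {S A W : Set X}
    [DecidablePred (· ∈ A)] (hsep : Separates S A W) {v : X → Y} {ρ : X → ℝ≥0∞}
    (hv : IsUpperGradient v ρ) {k : Y} (hk : ∀ x ∈ S ∩ W, v x = k) {γ : UPath X}
    (hγ : γ.InSet W) :
    edist (A.piecewise (fun _ => k) v γ.start) (A.piecewise (fun _ => k) v γ.finish) ≤
      γ.integral ρ := by
  have exits : ∀ γ : UPath X, γ.InSet W → γ.start ∈ A → γ.finish ∉ A →
      edist k (v γ.finish) ≤ γ.integral ρ := by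
    intro γ hγ hs hf
    obtain ⟨_, ⟨t, ht, rfl⟩, htS⟩ := hsep γ hγ hs hf
    calc edist k (v γ.finish) = edist (v (γ.toFun t)) (v γ.finish) := by
          rw [hk _ ⟨htS, hγ t ht⟩]
      _ ≤ (γ.tail t ht).integral ρ := hv (γ.tail t ht)
      _ ≤ γ.integral ρ := γ.integral_tail_le ht ρ
  by_cases hs : γ.start ∈ A <;> by_cases hf : γ.finish ∈ A <;> simp only [piecewise, hs, hf,
    if_true, if_false]
  · simp
  · exact exits γ hγ hs hf
  · rw [edist_comm]
    simpa only [γ.finish_reverse, γ.integral_reverse] using exits γ.reverse hγ.reverse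
      (γ.start_reverse ▸ hf) (γ.finish_reverse ▸ hs)
  · exact hv γ

end UpperGradient

/-! ### Cutoff functions of families of balls -/

section Cutoff

variable {X : Type*} [PseudoMetricSpace X]

/-- The cutoff function of slope `r⁻¹` which is `1` on `ball c r` and vanishes off
`ball c (2 * r)`.  It is identically zero when `r ≤ 0`, so that covers by possibly empty balls need
no special treatment. -/
def tent (c : X) (r : ℝ) (y : X) : ℝ := max 0 (min r (2 * r - dist y c)) / r

lemma tent_eq_zero {c : X} {r : ℝ} {y : X} (h : y ∉ ball c (2 * r)) : tent c r y = 0 := by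
  have : min r (2 * r - dist y c) ≤ 0 := (min_le_right _ _).trans (sub_nonpos.2 (not_lt.1 h))
  rw [tent, max_eq_left this, zero_div]

lemma tent_of_nonpos {r : ℝ} (hr : r ≤ 0) (c y : X) : tent c r y = 0 :=
  tent_eq_zero (by simp [ball_eq_empty.2 (by linarith : 2 * r ≤ 0)])

lemma tent_eq_one {c : X} {r : ℝ} {y : X} (h : y ∈ ball c r) : tent c r y = 1 := by
  have hr : 0 < r := pos_of_mem_ball h
  rw [tent, min_eq_left (by linarith [mem_ball.1 h]), max_eq_right hr.le, div_self hr.ne']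

lemma tent_mem_Icc (c : X) (r : ℝ) (y : X) : tent c r y ∈ Icc (0 : ℝ) 1 := by
  rcases le_or_gt r 0 with hr | hr
  · simp [tent_of_nonpos hr]
  · exact ⟨by unfold tent; positivity,
      div_le_one_of_le₀ (max_le hr.le (min_le_left _ _)) hr.le⟩

lemma continuous_tent (c : X) (r : ℝ) : Continuous (tent c r) := by
  unfold tent
  fun_prop

lemma lipschitzWith_tent (c : X) {r : ℝ} (hr : 0 < r) :
    LipschitzWith (Real.toNNReal r)⁻¹ (tent c r) := by
  have hnum : LipschitzWith 1 fun y => max 0 (min r (2 * r - dist y c)) := by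
    simpa only [zero_add] using
      (((LipschitzWith.const (2 * r)).sub (LipschitzWith.dist_left c)).const_min r).const_max 0
  refine LipschitzWith.of_dist_le_mul fun y z => ?_
  simp only [tent]
  rw [Real.dist_eq, ← sub_div, abs_div, abs_of_pos hr, div_eq_inv_mul, NNReal.coe_inv,
    Real.coe_toNNReal r hr.le, ← Real.dist_eq]
  gcongr
  simpa only [NNReal.coe_one, one_mul] using hnum.dist_le_mul y z

lemma isUpperGradient_tent (c : X) (r : ℝ) :
    IsUpperGradient (tent c r) ((ball c (2 * r)).indicator fun _ => (ENNReal.ofReal r)⁻¹) := by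
  rcases le_or_gt r 0 with hr | hr
  · intro γ
    simp [tent_of_nonpos hr]
  · have := isUpperGradient_indicator_of_lipschitzWith (lipschitzWith_tent c hr) isOpen_ball
      fun y => tent_eq_zero (y := y)
    rwa [ENNReal.coe_inv (Real.toNNReal_pos.2 hr).ne'] at this

/-- The supremum of the cutoff functions of a sequence of balls. -/
def supTent (c : ℕ → X) (r : ℕ → ℝ) (y : X) : ℝ := ⨆ i, tent (c i) (r i) y

/-- The upper gradient of `supTent c r` obtained by adding up those of the cutoff functions. -/
def sumGrad (c : ℕ → X) (r : ℕ → ℝ) (y : X) : ℝ≥0∞ :=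
  ∑' i, (ball (c i) (2 * r i)).indicator (fun _ => (ENNReal.ofReal (r i))⁻¹) y

variable {c : ℕ → X} {r : ℕ → ℝ}

lemma bddAbove_tent (c : ℕ → X) (r : ℕ → ℝ) (y : X) :
    BddAbove (range fun i => tent (c i) (r i) y) :=
  ⟨1, forall_mem_range.2 fun _ => (tent_mem_Icc _ _ _).2⟩

lemma supTent_mem_Icc (c : ℕ → X) (r : ℕ → ℝ) (y : X) : supTent c r y ∈ Icc (0 : ℝ) 1 :=
  ⟨Real.iSup_nonneg fun _ => (tent_mem_Icc _ _ _).1, ciSup_le fun _ => (tent_mem_Icc _ _ _).2⟩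

lemma supTent_eq_one {y : X} (h : y ∈ ⋃ i, ball (c i) (r i)) : supTent c r y = 1 := by
  obtain ⟨i, hi⟩ := mem_iUnion.1 h
  refine (supTent_mem_Icc c r y).2.antisymm ?_
  exact (tent_eq_one hi).symm.trans_le (le_ciSup (bddAbove_tent c r y) i)

lemma supTent_eq_zero {y : X} (h : y ∉ ⋃ i, ball (c i) (2 * r i)) : supTent c r y = 0 := by
  simp only [mem_iUnion, not_exists] at h
  simp only [supTent, tent_eq_zero (h _), ciSup_const]

lemma isUpperGradient_supTent (c : ℕ → X) (r : ℕ → ℝ) :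
    IsUpperGradient (supTent c r) (sumGrad c r) :=
  isUpperGradient_iSup
    (fun i => (isUpperGradient_tent (c i) (r i)).mono fun y => ENNReal.le_tsum
      (f := fun i => (ball (c i) (2 * r i)).indicator (fun _ => (ENNReal.ofReal (r i))⁻¹) y) i)
    (bddAbove_tent c r)

lemma measurable_supTent [MeasurableSpace X] [OpensMeasurableSpace X] (c : ℕ → X) (r : ℕ → ℝ) :
    Measurable (supTent c r) :=
  Measurable.iSup fun _ => (continuous_tent _ _).measurable

lemma measurable_sumGrad [MeasurableSpace X] [OpensMeasurableSpace X] (c : ℕ → X) (r : ℕ → ℝ) :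
    Measurable (sumGrad c r) :=
  Measurable.tsum fun _ => measurable_const.indicator measurableSet_ball

open scoped Classical in
/-- The indicator function of `A`, smoothed off `A` by the cutoff functions of a sequence of balls.
It is a competitor in the Poincaré inequality when these balls cover a set separating `A`. -/
def cutIndicator (A : Set X) (c : ℕ → X) (r : ℕ → ℝ) : X → ℝ :=
  A.piecewise (fun _ => 1) (supTent c r)

lemma cutIndicator_of_mem {A : Set X} {y : X} (hy : y ∈ A) : cutIndicator A c r y = 1 := by
  classical exact piecewise_eq_of_mem _ _ _ hy

lemma cutIndicator_of_notMem {A : Set X} {y : X} (hy : y ∉ A) :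
    cutIndicator A c r y = supTent c r y := by
  classical exact piecewise_eq_of_notMem _ _ _ hy

lemma cutIndicator_mem_Icc (A : Set X) (c : ℕ → X) (r : ℕ → ℝ) (y : X) :
    cutIndicator A c r y ∈ Icc (0 : ℝ) 1 := by
  by_cases hy : y ∈ A
  · simp [cutIndicator_of_mem hy]
  · simpa only [cutIndicator_of_notMem hy] using supTent_mem_Icc c r y

lemma measurable_cutIndicator [MeasurableSpace X] [OpensMeasurableSpace X] {A : Set X}
    (hA : MeasurableSet A) (c : ℕ → X) (r : ℕ → ℝ) : Measurable (cutIndicator A c r) :=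
  Measurable.piecewise hA measurable_const (measurable_supTent c r)

lemma Separates.isUpperGradient_cutIndicator {S A U W : Set X} (hsep : Separates S A W)
    (hUW : closure U ⊆ W) (hcov : S ∩ W ⊆ ⋃ i, ball (c i) (r i)) :
    IsUpperGradient (cutIndicator A c r) fun y => sumGrad c r y + Uᶜ.indicator (fun _ => ⊤) y := by
  refine isUpperGradient_add_indicator_top fun γ hγ => ?_
  unfold cutIndicator
  classical
  exact hsep.edist_piecewise_le (isUpperGradient_supTent c r) (fun _ hy => supTent_eq_one (hcov hy))
    fun t ht => hUW (hγ t ht)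

end Cutoff

/-! ### The relative isoperimetric inequality -/

section Isoperimetric

lemma min_measure_le_setLIntegral_sub {T : Type*} [MeasurableSpace T] {μ : Measure T} {u : T → ℝ}
    {B E F : Set T} (hE : MeasurableSet E) (hF : MeasurableSet F) (hEB : E ⊆ B) (hFB : F ⊆ B)
    (hEF : Disjoint E F) (hu₁ : ∀ y ∈ E, u y = 1) (hu₀ : ∀ y ∈ F, u y = 0) (k : ℝ) :
    min (μ E) (μ F) ≤ ∫⁻ y in B, ENNReal.ofReal |u y - k| ∂μ := by
  have hE_int : ∫⁻ y in E, ENNReal.ofReal |u y - k| ∂μ = ENNReal.ofReal |1 - k| * μ E := by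
    rw [← setLIntegral_const]
    exact setLIntegral_congr_fun hE fun y hy => by simp only [hu₁ y hy]
  have hF_int : ∫⁻ y in F, ENNReal.ofReal |u y - k| ∂μ = ENNReal.ofReal |k| * μ F := by
    rw [← setLIntegral_const]
    exact setLIntegral_congr_fun hF fun y hy => by simp only [hu₀ y hy, zero_sub, abs_neg]
  have one_le : (1 : ℝ≥0∞) ≤ ENNReal.ofReal |1 - k| + ENNReal.ofReal |k| := by
    rw [← ENNReal.ofReal_add (abs_nonneg _) (abs_nonneg _), ← ENNReal.ofReal_one]
    exact ENNReal.ofReal_le_ofReal (by simpa using abs_add_le (1 - k) k)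
  calc min (μ E) (μ F)
      ≤ (ENNReal.ofReal |1 - k| + ENNReal.ofReal |k|) * min (μ E) (μ F) :=
        le_mul_of_one_le_left' one_le
    _ ≤ ENNReal.ofReal |1 - k| * μ E + ENNReal.ofReal |k| * μ F := by
        rw [add_mul]
        gcongr
        · exact min_le_left _ _
        · exact min_le_right _ _
    _ = ∫⁻ y in E ∪ F, ENNReal.ofReal |u y - k| ∂μ := by
        rw [lintegral_union hF hEF, hE_int, hF_int]
    _ ≤ ∫⁻ y in B, ENNReal.ofReal |u y - k| ∂μ := lintegral_mono_set (union_subset hEB hFB)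

lemma ofReal_mul_diam_ball_le {T : Type*} [PseudoMetricSpace T] (k : ℝ) (x : T) {r : ℝ}
    (hr : 0 ≤ r) :
    ENNReal.ofReal (k * diam (ball x r)) ≤ ENNReal.ofReal (2 * |k|) * ENNReal.ofReal r := by
  rw [← ENNReal.ofReal_mul (by positivity)]
  refine ENNReal.ofReal_le_ofReal ?_
  calc k * diam (ball x r) ≤ |k| * (2 * r) :=
        mul_le_mul (le_abs_self k) (diam_ball hr) diam_nonneg (abs_nonneg k)
    _ = 2 * |k| * r := by ring

variable {T : Type*} [MetricSpace T] [MeasurableSpace T] {μ : Measure T} {Cμ : ℝ≥0∞} {CP lP : ℝ}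

namespace IsDoubling

lemma ne_zero (hd : IsDoubling μ Cμ) (x : T) (hT : 0 < diam (univ : Set T)) : Cμ ≠ 0 := by
  rintro rfl
  obtain ⟨hpos, hle, -⟩ := hd x _ (half_pos hT) (half_lt_self hT)
  simp [hpos.ne'] at hle

lemma ne_top (hd : IsDoubling μ Cμ) (x : T) (hT : 0 < diam (univ : Set T)) : Cμ ≠ ⊤ := by
  rintro rfl
  have hpos := (hd x (diam univ / 4) (by positivity) (by linarith)).1
  rw [show 2 * (diam (univ : Set T) / 4) = diam univ / 2 by ring] at hpos
  have hlt := (hd x _ (half_pos hT) (half_lt_self hT)).2.2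
  exact hlt.ne (ENNReal.top_mul hpos.ne')

protected lemma coe_toNNReal (hd : IsDoubling μ Cμ) : IsDoubling μ (Cμ.toNNReal : ℝ≥0∞) := by
  intro x r hr hrT
  rw [ENNReal.coe_toNNReal (hd.ne_top x (hr.trans hrT))]
  exact hd x r hr hrT

lemma measure_ball_two_mul_le (hd : IsDoubling μ Cμ) (x : T) {r : ℝ}
    (hr : r < diam (univ : Set T)) : μ (ball x (2 * r)) ≤ Cμ * μ (ball x r) := by
  rcases le_or_gt r 0 with h | h
  · simp [ball_eq_empty.2 (by linarith : 2 * r ≤ 0)]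
  · exact (hd x r h hr).2.1

lemma measure_ball_le_pow (hd : IsDoubling μ Cμ) (x : T) {r : ℝ} (hr : 0 ≤ r)
    (hrT : r < diam (univ : Set T)) (m : ℕ) :
    μ (ball x r) ≤ Cμ ^ m * μ (ball x (r / 2 ^ m)) := by
  induction m with
  | zero => simp
  | succ m ih =>
    have hlt : r / 2 ^ (m + 1) < diam (univ : Set T) :=
      (div_le_self hr (one_le_pow₀ one_le_two)).trans_lt hrT
    calc μ (ball x r) ≤ Cμ ^ m * μ (ball x (r / 2 ^ m)) := ih
      _ = Cμ ^ m * μ (ball x (2 * (r / 2 ^ (m + 1)))) := by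
          rw [show r / 2 ^ m = 2 * (r / 2 ^ (m + 1)) by field_simp; ring]
      _ ≤ Cμ ^ m * (Cμ * μ (ball x (r / 2 ^ (m + 1)))) := by
          gcongr
          exact hd.measure_ball_two_mul_le x hlt
      _ = Cμ ^ (m + 1) * μ (ball x (r / 2 ^ (m + 1))) := by ring

lemma measure_iUnion_ball_le (hd : IsDoubling μ Cμ) (c : ℕ → T) {r : ℕ → ℝ} {s : ℝ}
    (hrs : ∀ i, r i ≤ s) (hs : s < diam (univ : Set T)) :
    μ (⋃ i, ball (c i) (2 * r i)) ≤
      Cμ * ENNReal.ofReal s * ∑' i, μ (ball (c i) (r i)) / ENNReal.ofReal (r i) := by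
  have measure_le : ∀ i, μ (ball (c i) (r i)) ≤
      ENNReal.ofReal s * (μ (ball (c i) (r i)) / ENNReal.ofReal (r i)) := by
    intro i
    rcases le_or_gt (r i) 0 with h | h
    · simp [ball_eq_empty.2 h]
    calc μ (ball (c i) (r i))
        = ENNReal.ofReal (r i) * (μ (ball (c i) (r i)) / ENNReal.ofReal (r i)) :=
          (ENNReal.mul_div_cancel (ENNReal.ofReal_pos.2 h).ne' ENNReal.ofReal_ne_top).symm
      _ ≤ ENNReal.ofReal s * (μ (ball (c i) (r i)) / ENNReal.ofReal (r i)) := by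
          gcongr
          exact hrs i
  calc μ (⋃ i, ball (c i) (2 * r i)) ≤ ∑' i, μ (ball (c i) (2 * r i)) := measure_iUnion_le _
    _ ≤ ∑' i, Cμ * ENNReal.ofReal s * (μ (ball (c i) (r i)) / ENNReal.ofReal (r i)) := by
        refine ENNReal.tsum_le_tsum fun i => ?_
        rw [mul_assoc]
        exact (hd.measure_ball_two_mul_le _ ((hrs i).trans_lt hs)).trans
          (mul_le_mul_right (measure_le i) Cμ)
    _ = _ := ENNReal.tsum_mul_left

lemma lintegral_sumGrad_le [OpensMeasurableSpace T] (hd : IsDoubling μ Cμ) (c : ℕ → T) {r : ℕ → ℝ}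
    (hr : ∀ i, r i < diam (univ : Set T)) :
    ∫⁻ y, sumGrad c r y ∂μ ≤ Cμ * ∑' i, μ (ball (c i) (r i)) / ENNReal.ofReal (r i) := by
  unfold sumGrad
  rw [lintegral_tsum fun _ => (measurable_const.indicator measurableSet_ball).aemeasurable,
    ← ENNReal.tsum_mul_left]
  refine ENNReal.tsum_le_tsum fun i => ?_
  rw [lintegral_indicator_const measurableSet_ball, mul_comm, ← mul_div_assoc, div_eq_mul_inv]
  gcongr
  exact hd.measure_ball_two_mul_le _ (hr i)

end IsDoubling

lemma SupportsPoincare.isLocallyFiniteMeasure (hP : SupportsPoincare μ CP lP) :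
    IsLocallyFiniteMeasure μ :=
  ⟨fun x => ⟨ball x 1, ball_mem_nhds x one_pos, (hP.1 x 1 one_pos).2⟩⟩

lemma SupportsPoincare.isOpenPosMeasure (hP : SupportsPoincare μ CP lP) : μ.IsOpenPosMeasure := by
  refine ⟨fun U hU ⟨x, hx⟩ => ?_⟩
  obtain ⟨r, hr, hsub⟩ := Metric.isOpen_iff.1 hU x hx
  exact ((hP.1 x r hr).1.trans_le (measure_mono hsub)).ne'

/-- Dilating balls by `2 ^ N` absorbs the dilation `lP`, and doubling makes it possible to drop the
normalization of the averages. -/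
lemma SupportsPoincare.setLIntegral_sub_average_le (hP : SupportsPoincare μ CP lP)
    (hd : IsDoubling μ Cμ) {N : ℕ} (hN : max lP lP⁻¹ ≤ 2 ^ N) {u : T → ℝ} {ρ : T → ℝ≥0∞}
    (hu : LocallyIntegrable u μ) (hρ : Measurable ρ) (hug : IsUpperGradient u ρ) {x : T} {r : ℝ}
    (hr : 0 < r) (hrT : r < diam (univ : Set T)) :
    ∫⁻ y in ball x r, ENNReal.ofReal |u y - ⨍ z in ball x r, u z ∂μ| ∂μ ≤
      ENNReal.ofReal (2 * |CP|) * Cμ ^ N * ENNReal.ofReal r *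
        ∫⁻ y in ball x (2 ^ N * r), ρ y ∂μ := by
  have hB := hP.1 x r hr
  have hpoincare := hP.2 u ρ hu hρ hug x r hr
  rw [ENNReal.div_le_iff hB.1.ne' hB.2.ne, mul_assoc] at hpoincare
  have rescale : (∫⁻ y in ball x (lP * r), ρ y ∂μ) / μ (ball x (lP * r)) * μ (ball x r) ≤
      Cμ ^ N * ∫⁻ y in ball x (2 ^ N * r), ρ y ∂μ := by
    rcases le_or_gt lP 0 with hl | hl
    · simp [ball_eq_empty.2 (mul_nonpos_of_nonpos_of_nonneg hl hr.le)]
    have hlB := hP.1 x (lP * r) (by positivity)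
    have hdiv : r / 2 ^ N ≤ lP * r := by
      rw [div_eq_inv_mul]
      gcongr
      exact inv_le_of_inv_le₀ hl ((le_max_right _ _).trans hN)
    calc (∫⁻ y in ball x (lP * r), ρ y ∂μ) / μ (ball x (lP * r)) * μ (ball x r)
        ≤ (∫⁻ y in ball x (lP * r), ρ y ∂μ) / μ (ball x (lP * r)) *
          (Cμ ^ N * μ (ball x (lP * r))) := by
          gcongr
          exact (hd.measure_ball_le_pow x hr.le hrT N).trans (by gcongr)
      _ = Cμ ^ N * ((∫⁻ y in ball x (lP * r), ρ y ∂μ) / μ (ball x (lP * r)) *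
          μ (ball x (lP * r))) := by ring
      _ = Cμ ^ N * ∫⁻ y in ball x (lP * r), ρ y ∂μ := by
          rw [ENNReal.div_mul_cancel hlB.1.ne' hlB.2.ne]
      _ ≤ Cμ ^ N * ∫⁻ y in ball x (2 ^ N * r), ρ y ∂μ := by
          gcongr
          exact (le_max_left _ _).trans hN
  calc _ ≤ _ := hpoincare
    _ ≤ (ENNReal.ofReal (2 * |CP|) * ENNReal.ofReal r) *
        (Cμ ^ N * ∫⁻ y in ball x (2 ^ N * r), ρ y ∂μ) :=
        mul_le_mul' (ofReal_mul_diam_ball_le CP x hr.le) rescale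
    _ = _ := by ring

/-- The constant of the relative isoperimetric inequality on a space with doubling constant `Cμ`
and Poincaré constant `CP`, where `N` is such that dilation by `2 ^ N` absorbs the dilation in the
Poincaré inequality. -/
def isoperimetricConst (Cμ : ℝ≥0∞) (CP : ℝ) (N : ℕ) : ℝ≥0∞ :=
  ENNReal.ofReal (2 * |CP|) * Cμ ^ (N + 1) + Cμ

section

variable [OpensMeasurableSpace T] {N : ℕ} {A S : Set T} {x : T} {r : ℝ}

lemma SupportsPoincare.setLIntegral_cutIndicator_sub_average_le (hP : SupportsPoincare μ CP lP)
    (hd : IsDoubling μ Cμ) (hN : max lP lP⁻¹ ≤ 2 ^ N) (hA : MeasurableSet A) (hr : 0 < r)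
    (hrT : r < diam (univ : Set T)) (hsep : Separates S A (closedBall x (2 ^ N * r)))
    {c : ℕ → T} {s : ℕ → ℝ} (hs : ∀ i, s i ≤ r)
    (hcov : S ∩ closedBall x (2 ^ N * r) ⊆ ⋃ i, ball (c i) (s i)) :
    ∫⁻ y in ball x r, ENNReal.ofReal
        |cutIndicator A c s y - ⨍ z in ball x r, cutIndicator A c s z ∂μ| ∂μ ≤
      ENNReal.ofReal (2 * |CP|) * Cμ ^ (N + 1) * ENNReal.ofReal r *
        ∑' i, μ (ball (c i) (s i)) / ENNReal.ofReal (s i) := by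
  have := hP.isLocallyFiniteMeasure
  set B := ball x (2 ^ N * r)
  have hu_int : LocallyIntegrable (cutIndicator A c s) μ := by
    refine (locallyIntegrable_const (1 : ℝ)).mono
      (measurable_cutIndicator hA c s).aestronglyMeasurable (.of_forall fun y => ?_)
    obtain ⟨h₀, h₁⟩ := cutIndicator_mem_Icc A c s y
    rwa [norm_one, Real.norm_of_nonneg h₀]
  have hρ_meas : Measurable fun y => sumGrad c s y + Bᶜ.indicator (fun _ => ⊤) y :=
    (measurable_sumGrad c s).add (measurable_const.indicator measurableSet_ball.compl)
  have energy_le : ∫⁻ y in B, sumGrad c s y + Bᶜ.indicator (fun _ => ⊤) y ∂μ ≤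
      Cμ * ∑' i, μ (ball (c i) (s i)) / ENNReal.ofReal (s i) :=
    calc ∫⁻ y in B, sumGrad c s y + Bᶜ.indicator (fun _ => ⊤) y ∂μ
        = ∫⁻ y in B, sumGrad c s y ∂μ :=
          setLIntegral_congr_fun measurableSet_ball fun y hy => by
            simp only [indicator_of_notMem (notMem_compl_iff.2 hy), add_zero]
      _ ≤ ∫⁻ y, sumGrad c s y ∂μ := setLIntegral_le_lintegral _ _
      _ ≤ _ := hd.lintegral_sumGrad_le c fun i => (hs i).trans_lt hrT
  calc _ ≤ _ := hP.setLIntegral_sub_average_le hd hN hu_int hρ_meas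
          (hsep.isUpperGradient_cutIndicator closure_ball_subset_closedBall hcov) hr hrT
    _ ≤ ENNReal.ofReal (2 * |CP|) * Cμ ^ N * ENNReal.ofReal r *
          (Cμ * ∑' i, μ (ball (c i) (s i)) / ENNReal.ofReal (s i)) := by gcongr
    _ = _ := by ring

lemma SupportsPoincare.min_measure_le_tsum (hP : SupportsPoincare μ CP lP)
    (hd : IsDoubling μ Cμ) (hN : max lP lP⁻¹ ≤ 2 ^ N) (hA : MeasurableSet A) (hr : 0 < r)
    (hrT : r < diam (univ : Set T)) (hsep : Separates S A (closedBall x (2 ^ N * r)))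
    {c : ℕ → T} {s : ℕ → ℝ} (hs : ∀ i, s i ≤ r)
    (hcov : S ∩ closedBall x (2 ^ N * r) ⊆ ⋃ i, ball (c i) (s i)) :
    min (μ (ball x r ∩ A)) (μ (ball x r \ A)) ≤
      isoperimetricConst Cμ CP N * ENNReal.ofReal r *
        ∑' i, μ (ball (c i) (s i)) / ENNReal.ofReal (s i) := by
  set G := ⋃ i, ball (c i) (2 * s i)
  have hG : MeasurableSet G := MeasurableSet.iUnion fun _ => measurableSet_ball
  have hmin : min (μ (ball x r ∩ A)) (μ ((ball x r \ A) \ G)) ≤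
      ∫⁻ y in ball x r, ENNReal.ofReal
        |cutIndicator A c s y - ⨍ z in ball x r, cutIndicator A c s z ∂μ| ∂μ :=
    min_measure_le_setLIntegral_sub (measurableSet_ball.inter hA)
      ((measurableSet_ball.diff hA).diff hG) inter_subset_left (sdiff_subset.trans sdiff_subset)
      (disjoint_left.2 fun y hy hy' => hy'.1.2 hy.2)
      (fun y hy => cutIndicator_of_mem hy.2)
      (fun y hy => (cutIndicator_of_notMem hy.1.2).trans (supTent_eq_zero hy.2)) _
  have diff_le : μ (ball x r \ A) ≤ μ ((ball x r \ A) \ G) + μ G :=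
    (measure_le_inter_add_sdiff μ _ G).trans (by rw [add_comm]; gcongr; exact inter_subset_right)
  calc min (μ (ball x r ∩ A)) (μ (ball x r \ A))
      ≤ min (μ (ball x r ∩ A)) (μ ((ball x r \ A) \ G)) + μ G := by
        rw [← min_add_add_right]
        exact min_le_min le_self_add diff_le
    _ ≤ _ := add_le_add
          (hmin.trans (hP.setLIntegral_cutIndicator_sub_average_le hd hN hA hr hrT hsep hs hcov))
          (hd.measure_iUnion_ball_le c hs hrT)
    _ = _ := by rw [isoperimetricConst]; ring

lemma SupportsPoincare.min_measure_le_codimH (hP : SupportsPoincare μ CP lP)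
    (hd : IsDoubling μ Cμ) (hN : max lP lP⁻¹ ≤ 2 ^ N) (hA : MeasurableSet A) (hr : 0 < r)
    (hrT : r < diam (univ : Set T)) (hsep : Separates S A (closedBall x (2 ^ N * r))) :
    min (μ (ball x r ∩ A)) (μ (ball x r \ A)) ≤
      isoperimetricConst Cμ CP N * ENNReal.ofReal r *
        codimH μ (S ∩ closedBall x (2 ^ N * r)) := by
  have hCμ₀ := hd.ne_zero x (hr.trans hrT)
  have hCμ := hd.ne_top x (hr.trans hrT)
  have hK₀ : isoperimetricConst Cμ CP N * ENNReal.ofReal r ≠ 0 := by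
    simp [isoperimetricConst, hCμ₀, hr]
  have hK : isoperimetricConst Cμ CP N * ENNReal.ofReal r ≠ ⊤ := by
    unfold isoperimetricConst
    finiteness
  rw [← ENNReal.div_le_iff' hK₀ hK]
  refine le_iSup₂_of_le r hr (le_iInf₂ fun c s => le_iInf₂ fun hs hcov => ?_)
  exact ENNReal.div_le_of_le_mul' (hP.min_measure_le_tsum hd hN hA hr hrT hsep hs hcov)

end

end Isoperimetric

/-! ### Balls that are cut in comparable parts -/

section Balanced

lemma disjoint_closedBall_of_forall_lt_dist {X : Type*} [PseudoMetricSpace X] {S : Set X} {x : X}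
    {r : ℝ} (h : ∀ y ∈ S, r < dist x y) : Disjoint S (closedBall x r) :=
  disjoint_left.2 fun y hy hyr => (mem_closedBall'.1 hyr).not_gt (h y hy)

variable {T : Type*} [MetricSpace T] [MeasurableSpace T] {μ : Measure T} {Cμ : ℝ≥0∞}
  {CP lP r : ℝ} {N : ℕ} {A S P : Set T} {x y z w : T}

lemma codimH_mono {A B : Set T} (h : A ⊆ B) : codimH μ A ≤ codimH μ B :=
  iSup₂_mono fun _ _ => le_iInf₂ fun c s => le_iInf₂ fun hs hB =>
    iInf₂_le_of_le c s (iInf₂_le hs (h.trans hB))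

lemma codimH_empty [Nonempty T] : codimH μ (∅ : Set T) = 0 := by
  refine le_bot_iff.1 (iSup₂_le fun δ hδ => ?_)
  refine iInf₂_le_of_le (fun _ => Classical.arbitrary T) (fun _ => 0) ?_
  refine iInf₂_le_of_le (fun _ => hδ.le) (empty_subset _) ?_
  simp

/-- Compare both `μ (ball z r)` and `μ (ball w r)` with the measure of `ball z (r / 2)`, which is
contained in both balls. -/
lemma IsDoubling.measure_ball_le_inter_or_le_sdiff (hd : IsDoubling μ Cμ) (hr : 0 < r)
    (hrT : r < diam (univ : Set T)) (hzw : dist z w < r / 2) :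
    μ (ball z r) ≤ (Cμ + Cμ ^ 2) * μ (ball z r ∩ A) ∨
      μ (ball w r) ≤ (Cμ + Cμ ^ 2) * μ (ball w r \ A) := by
  have hz : μ (ball z r) ≤ Cμ * μ (ball z (r / 2)) := by
    simpa using hd.measure_ball_le_pow z hr.le hrT 1
  have hw : μ (ball w r) ≤ Cμ ^ 2 * μ (ball z (r / 2)) :=
    calc μ (ball w r) ≤ Cμ * μ (ball w (r / 2)) := by
          simpa using hd.measure_ball_le_pow w hr.le hrT 1
      _ ≤ Cμ * μ (ball z r) := by
          gcongr
          exact ball_subset_ball' (by rw [dist_comm]; linarith)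
      _ ≤ Cμ * (Cμ * μ (ball z (r / 2))) := by gcongr
      _ = Cμ ^ 2 * μ (ball z (r / 2)) := by ring
  have split : μ (ball z (r / 2)) ≤ μ (ball z r ∩ A) + μ (ball w r \ A) :=
    (measure_le_inter_add_sdiff μ _ A).trans <| by
      gcongr
      · linarith
      · exact ball_subset_ball' (by linarith)
  by_contra! hlt
  refine (ENNReal.add_lt_add hlt.1 hlt.2).not_ge ?_
  calc μ (ball z r) + μ (ball w r)
      ≤ Cμ * μ (ball z (r / 2)) + Cμ ^ 2 * μ (ball z (r / 2)) := add_le_add hz hw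
    _ = (Cμ + Cμ ^ 2) * μ (ball z (r / 2)) := by ring
    _ ≤ (Cμ + Cμ ^ 2) * (μ (ball z r ∩ A) + μ (ball w r \ A)) := by gcongr
    _ = _ := mul_add _ _ _

lemma IsDoubling.exists_measure_ball_le_min (hd : IsDoubling μ Cμ) (hr : 0 < r)
    (hrT : r < diam (univ : Set T)) (hpos : ∀ z, 0 < μ (ball z r)) (hP : IsPreconnected P)
    (hx : x ∈ P) (hxA : μ (ball x r ∩ A) = 0) (hy : y ∈ P) (hyA : μ (ball y r \ A) = 0) :
    ∃ z ∈ P, μ (ball z r) ≤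
      (Cμ + Cμ ^ 2) * min (μ (ball z r ∩ A)) (μ (ball z r \ A)) := by
  set p : T → Prop := fun z => μ (ball z r) ≤ (Cμ + Cμ ^ 2) * μ (ball z r ∩ A)
  set q : T → Prop := fun z => μ (ball z r) ≤ (Cμ + Cμ ^ 2) * μ (ball z r \ A)
  have hpx : ¬ p x := by simpa only [p, hxA, mul_zero, not_le] using hpos x
  have hqy : ¬ q y := by simpa only [q, hyA, mul_zero, not_le] using hpos y
  by_contra! hcontra
  have not_both : ∀ z ∈ P, p z → ¬ q z := fun z hz hpz hqz =>
    (hcontra z hz).not_ge (by rw [mul_min]; exact le_min hpz hqz)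
  have or_of_dist_lt : ∀ {z w}, dist z w < r / 2 → p z ∨ q w :=
    hd.measure_ball_le_inter_or_le_sdiff hr hrT
  have near : ∀ z ∈ P, ∀ᶠ w in 𝓝[P] z, (p z ↔ p w) := by
    intro z hz
    filter_upwards [self_mem_nhdsWithin,
      mem_nhdsWithin_of_mem_nhds (ball_mem_nhds z (half_pos hr))] with w hw hwz
    exact ⟨fun h => (or_of_dist_lt hwz).resolve_right (not_both z hz h),
      fun h => (or_of_dist_lt (dist_comm z w ▸ hwz)).resolve_right (not_both w hw h)⟩
  have hpy : ¬ p y := mt (hP.induction₂ (fun z w => p z ↔ p w) near (fun _ _ _ _ _ _ => Iff.trans)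
    (fun _ _ _ _ => Iff.symm) hx hy).2 hpx
  exact (or_of_dist_lt (by simpa using hr)).elim hpy hqy

namespace SupportsPoincare

variable [OpensMeasurableSpace T]

lemma min_measure_eq_zero (hP : SupportsPoincare μ CP lP) (hd : IsDoubling μ Cμ)
    (hN : max lP lP⁻¹ ≤ 2 ^ N) (hA : MeasurableSet A) (hr : 0 < r)
    (hrT : r < diam (univ : Set T)) (hsep : Separates S A (closedBall x (2 ^ N * r)))
    (hS : Disjoint S (closedBall x (2 ^ N * r))) :
    min (μ (ball x r ∩ A)) (μ (ball x r \ A)) = 0 := by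
  have : Nonempty T := ⟨x⟩
  simpa [hS.inter_eq, codimH_empty] using hP.min_measure_le_codimH hd hN hA hr hrT hsep

lemma measure_ball_inter_eq_zero (hP : SupportsPoincare μ CP lP) (hd : IsDoubling μ Cμ)
    (hN : max lP lP⁻¹ ≤ 2 ^ N) (hA : MeasurableSet A) (hr : 0 < r)
    (hrT : r < diam (univ : Set T)) (hsep : Separates S A (closedBall x (2 ^ N * r)))
    (hS : Disjoint S (closedBall x (2 ^ N * r))) (hx : Aᶜ ∈ 𝓝 x) : μ (ball x r ∩ A) = 0 := by
  have := hP.isOpenPosMeasure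
  have hpos : μ (ball x r \ A) ≠ 0 :=
    (Measure.measure_pos_of_mem_nhds μ (inter_mem (ball_mem_nhds x hr) hx)).ne'
  exact (min_eq_bot.1 (hP.min_measure_eq_zero hd hN hA hr hrT hsep hS)).resolve_right hpos

lemma disjoint_ball (hP : SupportsPoincare μ CP lP) (hd : IsDoubling μ Cμ)
    (hN : max lP lP⁻¹ ≤ 2 ^ N) (hA : IsOpen A) (hr : 0 < r) (hrT : r < diam (univ : Set T))
    (hsep : Separates S A (closedBall x (2 ^ N * r))) (hS : Disjoint S (closedBall x (2 ^ N * r)))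
    (hx : Aᶜ ∈ 𝓝 x) : Disjoint (ball x r) A := by
  have := hP.isOpenPosMeasure
  rw [disjoint_iff_inter_eq_empty, ← (isOpen_ball.inter hA).measure_eq_zero_iff μ]
  exact hP.measure_ball_inter_eq_zero hd hN hA.measurableSet hr hrT hsep hS hx

lemma measure_ball_sdiff_eq_zero (hP : SupportsPoincare μ CP lP) (hd : IsDoubling μ Cμ)
    (hN : max lP lP⁻¹ ≤ 2 ^ N) (hA : MeasurableSet A) (hr : 0 < r)
    (hrT : r < diam (univ : Set T)) (hsep : Separates S A (closedBall x (2 ^ N * r)))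
    (hS : Disjoint S (closedBall x (2 ^ N * r))) (hx : A ∈ 𝓝 x) : μ (ball x r \ A) = 0 := by
  have := hP.isOpenPosMeasure
  have hpos : μ (ball x r ∩ A) ≠ 0 :=
    (Measure.measure_pos_of_mem_nhds μ (inter_mem (ball_mem_nhds x hr) hx)).ne'
  exact (min_eq_bot.1 (hP.min_measure_eq_zero hd hN hA hr hrT hsep hS)).resolve_left hpos

lemma exists_measure_ball_le_codimH (hP : SupportsPoincare μ CP lP) (hd : IsDoubling μ Cμ)
    (hN : max lP lP⁻¹ ≤ 2 ^ N) (hA : MeasurableSet A) (hr : 0 < r)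
    (hrT : r < diam (univ : Set T)) (hPc : IsPreconnected P)
    (hsep : ∀ z ∈ P, Separates S A (closedBall z (2 ^ N * r)))
    (hx : x ∈ P) (hxA : Aᶜ ∈ 𝓝 x) (hxS : Disjoint S (closedBall x (2 ^ N * r)))
    (hy : y ∈ P) (hyA : A ∈ 𝓝 y) (hyS : Disjoint S (closedBall y (2 ^ N * r))) :
    ∃ z ∈ P, μ (ball z r) ≤ (Cμ + Cμ ^ 2) * isoperimetricConst Cμ CP N *
      ENNReal.ofReal r * codimH μ (S ∩ closedBall z (2 ^ N * r)) := by
  obtain ⟨z, hz, hle⟩ := hd.exists_measure_ball_le_min hr hrT (fun z => (hP.1 z r hr).1) hPc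
    hx (hP.measure_ball_inter_eq_zero hd hN hA hr hrT (hsep x hx) hxS hxA)
    hy (hP.measure_ball_sdiff_eq_zero hd hN hA hr hrT (hsep y hy) hyS hyA)
  refine ⟨z, hz, hle.trans ?_⟩
  rw [mul_assoc, mul_assoc, ← mul_assoc (isoperimetricConst _ _ _)]
  exact mul_le_mul_right (hP.min_measure_le_codimH hd hN hA hr hrT (hsep z hz)) _

end SupportsPoincare

end Balanced

/-! ### Level sets of a lift of a map to the circle -/

section Slab

lemma exists_mem_frontier_of_mem_of_notMem {X Y : Type*} [TopologicalSpace X] [PreconnectedSpace X]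
    [TopologicalSpace Y] {f : X → Y} (hf : Continuous f) {s : Set Y} {x y : X} (hx : f x ∈ s)
    (hy : f y ∉ s) : ∃ z, f z ∈ frontier s := by
  obtain ⟨z, hz⟩ := nonempty_frontier_iff (s := f ⁻¹' s) |>.2
    ⟨⟨x, hx⟩, fun h => hy (eq_univ_iff_forall.1 h y)⟩
  exact ⟨z, hf.frontier_preimage_subset s hz⟩

lemma exists_image_Icc_eq_Icc {α β : Type*} [ConditionallyCompleteLinearOrder α]
    [TopologicalSpace α] [OrderTopology α] [DenselyOrdered α] [LinearOrder β] [TopologicalSpace β]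
    [OrderClosedTopology β] {f : α → β} {a b : α} (hf : ContinuousOn f (Icc a b)) (hab : a ≤ b)
    (hfab : f a ≤ f b) : ∃ s e, Icc s e ⊆ Icc a b ∧ f '' Icc s e = Icc (f a) (f b) := by
  have isCompact_level : ∀ {e : α} (k : β), e ∈ Icc a b → IsCompact (Icc a e ∩ f ⁻¹' {k}) :=
    fun k he => isCompact_Icc.of_isClosed_subset
      ((hf.mono (Icc_subset_Icc_right he.2)).preimage_isClosed_of_isClosed isClosed_Icc
        isClosed_singleton) inter_subset_left
  obtain ⟨e, ⟨he, hfe⟩, hmin⟩ := (isCompact_level (f b) ⟨hab, le_rfl⟩).exists_isLeast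
    ⟨b, ⟨hab, le_rfl⟩, rfl⟩
  obtain ⟨s, ⟨hs, hfs⟩, hmax⟩ := (isCompact_level (f a) he).exists_isGreatest
    ⟨a, ⟨le_rfl, he.1⟩, rfl⟩
  rw [mem_preimage, mem_singleton_iff] at hfe hfs
  have hsub : Icc s e ⊆ Icc a b := Icc_subset_Icc hs.1 he.2
  refine ⟨s, e, hsub, Subset.antisymm ?_ ?_⟩
  · rintro _ ⟨t, ht, rfl⟩
    constructor
    · by_contra! h
      obtain ⟨u, hu, hfu⟩ := intermediate_value_Icc ht.2 (hf.mono
        ((Icc_subset_Icc_left ht.1).trans hsub)) ⟨h.le, hfab.trans_eq hfe.symm⟩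
      have hus : u ≤ s := hmax ⟨⟨hs.1.trans (ht.1.trans hu.1), hu.2⟩, hfu⟩
      rw [← hfu, le_antisymm (hus.trans ht.1) hu.1] at h
      exact lt_irrefl _ h
    · by_contra! h
      obtain ⟨u, hu, hfu⟩ := intermediate_value_Icc ht.1 (hf.mono
        ((Icc_subset_Icc_right ht.2).trans hsub)) ⟨hfs.trans_le hfab, h.le⟩
      have heu : e ≤ u := hmin ⟨⟨hs.1.trans hu.1, (hu.2.trans ht.2).trans he.2⟩, hfu⟩
      rw [← hfu, le_antisymm (ht.2.trans heu) hu.2] at h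
      exact lt_irrefl _ h
  · simpa only [hfs, hfe] using intermediate_value_Icc hs.2 (hf.mono hsub)

variable {T Tt : Type*} {π : Tt → T} {φt : Tt → ℝ}

/-- The part of `T` swept out by the values of `φt` in `s`, where `π : Tt → T` is a covering and
`φt` lifts a map from `T` to the circle. For `s = {0}` it is the set `S` of the paper. -/
def slab (π : Tt → T) (φt : Tt → ℝ) (s : Set ℝ) : Set T := π '' (φt ⁻¹' s)

lemma slab_mono {s t : Set ℝ} (h : s ⊆ t) : slab π φt s ⊆ slab π φt t :=
  image_mono (preimage_mono h)

lemma slab_union (s t : Set ℝ) : slab π φt (s ∪ t) = slab π φt s ∪ slab π φt t := by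
  rw [slab, preimage_union, image_union, slab, slab]

lemma mem_of_proj_mem_slab {φ : T → UnitAddCircle} (hlift : ∀ x, (φt x : UnitAddCircle) = φ (π x))
    {w : ℝ} {s : Set ℝ} (hs : s ⊆ Ico w (w + 1)) {x : Tt} (hx : φt x ∈ Ico w (w + 1))
    (h : π x ∈ slab π φt s) : φt x ∈ s := by
  obtain ⟨y, hy, hyx⟩ := h
  have : (φt x : UnitAddCircle) = φt y := by rw [hlift, hlift, hyx]
  rwa [(AddCircle.coe_eq_coe_iff_of_mem_Ico hx (hs hy)).1 this]

lemma disjoint_slab {φ : T → UnitAddCircle} (hlift : ∀ x, (φt x : UnitAddCircle) = φ (π x))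
    {w : ℝ} {s t : Set ℝ} (hs : s ⊆ Ico w (w + 1)) (ht : t ⊆ Ico w (w + 1)) (hst : Disjoint s t) :
    Disjoint (slab π φt s) (slab π φt t) := by
  rw [disjoint_left]
  rintro _ ⟨x, hx, rfl⟩ h
  exact disjoint_left.1 hst hx (mem_of_proj_mem_slab hlift ht (hs hx) h)

variable [TopologicalSpace Tt]

lemma isOpen_slab [TopologicalSpace T] (hπ : IsOpenMap π) (hφt : Continuous φt) {s : Set ℝ}
    (hs : IsOpen s) : IsOpen (slab π φt s) :=
  hπ _ (hs.preimage hφt)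

lemma compl_slab_mem_nhds [TopologicalSpace T] (hπ : IsOpenMap π) (hφt : Continuous φt)
    {φ : T → UnitAddCircle} (hlift : ∀ x, (φt x : UnitAddCircle) = φ (π x)) {w : ℝ} {s V : Set ℝ}
    (hs : s ⊆ Ico w (w + 1)) (hVw : V ⊆ Ico w (w + 1)) (hV : IsOpen V) (hVs : Disjoint V s)
    {x : T} (hx : x ∈ slab π φt V) : (slab π φt s)ᶜ ∈ 𝓝 x :=
  mem_of_superset ((isOpen_slab hπ hφt hV).mem_nhds hx)
    (disjoint_slab hlift hVw hs hVs).subset_compl_right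

lemma compl_slab_Ioo_mem_nhds_of_lt [TopologicalSpace T] (hπ : IsOpenMap π) (hφt : Continuous φt)
    {φ : T → UnitAddCircle} (hlift : ∀ x, (φt x : UnitAddCircle) = φ (π x)) {a b u : ℝ}
    (hab : a ≤ b) (hua : u < a) (hbu : b < u + 1) {x : T} (hx : x ∈ slab π φt {u}) :
    (slab π φt (Ioo a b))ᶜ ∈ 𝓝 x :=
  compl_slab_mem_nhds hπ hφt hlift (w := b - 1) (V := Ioo (b - 1) a)
    (fun v hv => ⟨by linarith [hv.1], by linarith [hv.2]⟩)
    (fun v hv => ⟨hv.1.le, by linarith [hv.2]⟩) isOpen_Ioo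
    (disjoint_left.2 fun v hv hv' => hv.2.not_gt hv'.1)
    (slab_mono (singleton_subset_iff.2 (mem_Ioo.2 ⟨by linarith, hua⟩)) hx)

lemma compl_slab_Ioo_mem_nhds_of_gt [TopologicalSpace T] (hπ : IsOpenMap π) (hφt : Continuous φt)
    {φ : T → UnitAddCircle} (hlift : ∀ x, (φt x : UnitAddCircle) = φ (π x)) {a b u : ℝ}
    (hab : a ≤ b) (hbu : b < u) (hua : u < a + 1) {x : T} (hx : x ∈ slab π φt {u}) :
    (slab π φt (Ioo a b))ᶜ ∈ 𝓝 x :=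
  compl_slab_mem_nhds hπ hφt hlift (w := a) (V := Ioo b (a + 1))
    (fun v hv => ⟨hv.1.le, by linarith [hv.2]⟩)
    (fun v hv => ⟨by linarith [hv.1], hv.2⟩) isOpen_Ioo
    (disjoint_left.2 fun v hv hv' => hv.1.not_gt hv'.2)
    (slab_mono (singleton_subset_iff.2 (mem_Ioo.2 ⟨hbu, hua⟩)) hx)

variable [PseudoMetricSpace T]

lemma exists_lift_toPath (hπ : IsCoveringMap π) (γ : UPath T) {x : Tt} (hx : π x = γ.start) :
    ∃ Γ : C(I, Tt), (∀ t, π (Γ t) = γ.toPath t) ∧ Γ 0 = x := by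
  obtain ⟨Γ, hΓ, hΓ₀⟩ := hπ.exists_path_lifts γ.toPath.toContinuousMap x
    (γ.toPath.source.trans hx.symm)
  exact ⟨Γ, congrFun hΓ, hΓ₀⟩

lemma separates_slab (hπ : IsCoveringMap π) (hφt : Continuous φt) (s : Set ℝ) (W : Set T) :
    Separates (slab π φt (frontier s)) (slab π φt s) W := by
  rintro γ - ⟨x, hxs, hx⟩ hf
  obtain ⟨Γ, hΓ, rfl⟩ := exists_lift_toPath hπ γ hx
  have h₁ : φt (Γ 1) ∉ s := fun h => hf ⟨Γ 1, h, (hΓ 1).trans γ.toPath.target⟩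
  obtain ⟨u, hu⟩ := exists_mem_frontier_of_mem_of_notMem (hφt.comp Γ.continuous) hxs h₁
  exact ⟨_, γ.toPath_mem_trace u, Γ u, hu, hΓ u⟩

lemma exists_lift_of_inSet_slab_Ioo (hπ : IsCoveringMap π) (hφt : Continuous φt)
    {φ : T → UnitAddCircle} (hlift : ∀ x, (φt x : UnitAddCircle) = φ (π x)) {a b : ℝ}
    (hab : b < a + 1) {s t : ℝ} (hs : s ∈ Ioo a b)
    (ht : t ∈ Ioo a b) {γ : UPath T} (hγ : γ.InSet (slab π φt (Ioo a b)))
    (hstart : γ.start ∈ slab π φt {s}) (hfinish : γ.finish ∈ slab π φt {t}) :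
    ∃ Γ : C(I, Tt), (∀ u, π (Γ u) = γ.toPath u) ∧ φt (Γ 0) = s ∧ φt (Γ 1) = t := by
  obtain ⟨x, rfl, hx⟩ := hstart
  obtain ⟨Γ, hΓ, rfl⟩ := exists_lift_toPath hπ γ hx
  have hIoo : Ioo a b ⊆ Ico a (a + 1) := fun u hu => ⟨hu.1.le, hu.2.trans hab⟩
  have hends : {a, b} ⊆ Ico a (a + 1) :=
    pair_subset (left_mem_Ico.2 (lt_add_one a)) ⟨(hs.1.trans hs.2).le, hab⟩
  have not_mem_ends : ∀ u, φt (Γ u) ∉ ({a, b} : Set ℝ) := by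
    intro u hu
    obtain ⟨v, hv, hvu⟩ := γ.toPath_mem_trace u
    have hmem := mem_of_proj_mem_slab hlift hIoo (hends hu) (hΓ u ▸ hvu ▸ hγ v hv)
    rcases hu with h | h
    · exact hmem.1.ne' h
    · exact hmem.2.ne h
  have h₁ : φt (Γ 1) ∈ Ioo a b := by
    by_contra h
    obtain ⟨u, hu⟩ := exists_mem_frontier_of_mem_of_notMem (hφt.comp Γ.continuous) hs h
    exact not_mem_ends u (frontier_Ioo (hs.1.trans hs.2) ▸ hu)
  exact ⟨Γ, hΓ, rfl, mem_of_proj_mem_slab hlift (singleton_subset_iff.2 (hIoo ht)) (hIoo h₁)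
    (by rwa [hΓ 1, γ.toPath.target])⟩

lemma exists_isPreconnected_subset_trace (hπ : IsCoveringMap π) (hφt : Continuous φt)
    {φ : T → UnitAddCircle} (hlift : ∀ x, (φt x : UnitAddCircle) = φ (π x)) {a b : ℝ}
    (hab : b < a + 1) {s t : ℝ} (hs : a < s) (hst : s ≤ t) (ht : t < b) {γ : UPath T}
    (hγ : γ.InSet (slab π φt (Ioo a b))) (hstart : γ.start ∈ slab π φt {s})
    (hfinish : γ.finish ∈ slab π φt {t}) :
    ∃ P ⊆ γ.trace, IsPreconnected P ∧ P ⊆ slab π φt (Icc s t) ∧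
      ∀ c ∈ Icc s t, (P ∩ slab π φt {c}).Nonempty := by
  obtain ⟨Γ, hΓ, rfl, rfl⟩ := exists_lift_of_inSet_slab_Ioo hπ hφt hlift hab
    ⟨hs, hst.trans_lt ht⟩ ⟨hs.trans_le hst, ht⟩ hγ hstart hfinish
  obtain ⟨u, v, -, himage⟩ := exists_image_Icc_eq_Icc
    (hφt.comp Γ.continuous).continuousOn (zero_le_one (α := I)) hst
  refine ⟨γ.toPath '' Icc u v, ?_, isPreconnected_Icc.image _ γ.toPath.continuous.continuousOn,
    ?_, fun c hc => ?_⟩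
  · exact image_subset_iff.2 fun t _ => γ.toPath_mem_trace t
  · rintro _ ⟨t, ht, rfl⟩
    exact ⟨Γ t, himage.subset (mem_image_of_mem _ ht), hΓ t⟩
  · obtain ⟨t, ht, rfl⟩ := himage.superset hc
    exact ⟨γ.toPath t, mem_image_of_mem _ ht, Γ t, rfl, hΓ t⟩

end Slab

/-! ### Crossing a level set -/

section Crossing

/-- The constant relating the measure of a ball to the codimension 1 content of the level set in it.
The powers of the doubling constant account for shrinking the ball and for balancing it. -/
def crossingConst (Cμ : ℝ≥0∞) (CP : ℝ) (N : ℕ) : ℝ≥0∞ :=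
  Cμ ^ (2 * N + 1) * ((Cμ + Cμ ^ 2) * isoperimetricConst Cμ CP N)

variable {T : Type*} [MetricSpace T] [MeasurableSpace T] [OpensMeasurableSpace T] {Tt : Type*}
  [TopologicalSpace Tt] {μ : Measure T} {Cμ : ℝ≥0∞} {CP lP r R : ℝ} {N : ℕ} {π : Tt → T}
  {φ : T → UnitAddCircle} {φt : Tt → ℝ} {a b c d e : ℝ}

namespace SupportsPoincare

/-- A ball around a point of level `a` or `d` which avoids the levels `b` and `c` meets the open set
between these two levels in a null set by the relative isoperimetric inequality, hence not at
all. -/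
lemma div_two_pow_le_dist_slab (hP : SupportsPoincare μ CP lP) (hd : IsDoubling μ Cμ)
    (hN : max lP lP⁻¹ ≤ 2 ^ N) (hπ : IsCoveringMap π) (hφt : Continuous φt)
    (hlift : ∀ x, (φt x : UnitAddCircle) = φ (π x)) (hab : a < b) (hbc : b < c) (hcd : c < d)
    (hda : d < a + 1) (hR : 0 < R) (hRT : R < diam (univ : Set T))
    (hfar : ∀ x ∈ slab π φt {a, d}, ∀ y ∈ slab π φt {b, c}, R < dist x y) {x y : T}
    (hx : x ∈ slab π φt (Icc b c)) (hy : y ∈ slab π φt {a, d}) : R / 2 ^ N ≤ dist x y := by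
  have hle : R / 2 ^ N ≤ R := div_le_self hR.le (one_le_pow₀ one_le_two)
  rw [← Ioo_union_both hbc.le, slab_union] at hx
  rcases hx with hx | hx
  · have hmul : 2 ^ N * (R / 2 ^ N) = R := mul_div_cancel₀ _ (by positivity)
    have hnhds : (slab π φt (Ioo b c))ᶜ ∈ 𝓝 y := by
      rw [insert_eq, slab_union] at hy
      rcases hy with hy | hy
      · exact compl_slab_Ioo_mem_nhds_of_lt hπ.isOpenMap hφt hlift hbc.le hab (hcd.trans hda) hy
      · exact compl_slab_Ioo_mem_nhds_of_gt hπ.isOpenMap hφt hlift hbc.le hcd (by linarith) hy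
    have hball : Disjoint (ball y (R / 2 ^ N)) (slab π φt (Ioo b c)) :=
      hP.disjoint_ball hd hN (isOpen_slab hπ.isOpenMap hφt isOpen_Ioo) (by positivity)
        (hle.trans_lt hRT) (separates_slab hπ hφt _ _) (by
          rw [hmul, frontier_Ioo hbc]
          exact disjoint_closedBall_of_forall_lt_dist (hfar y hy)) hnhds
    exact not_lt.1 fun h => disjoint_left.1 hball (mem_ball.2 h) hx
  · exact hle.trans (dist_comm x y ▸ (hfar y hy x hx).le)

lemma exists_measure_ball_le_codimH_slab (hP : SupportsPoincare μ CP lP) (hd : IsDoubling μ Cμ)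
    (hN : max lP lP⁻¹ ≤ 2 ^ N) (hπ : IsCoveringMap π) (hφt : Continuous φt)
    (hlift : ∀ x, (φt x : UnitAddCircle) = φ (π x)) (hbc : b < c) (hcd : c < d) (hde : d < e)
    (heb : e < b + 1) (hr : 0 < r) (hrT : r < diam (univ : Set T)) {P : Set T}
    (hPc : IsPreconnected P) (hPb : (P ∩ slab π φt {b}).Nonempty)
    (hPd : (P ∩ slab π φt {d}).Nonempty)
    (far_c : ∀ x ∈ slab π φt {b, d}, ∀ y ∈ slab π φt {c}, 2 ^ N * r < dist x y)
    (far_e : ∀ x ∈ P, ∀ y ∈ slab π φt {e}, 2 ^ N * r < dist x y) :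
    ∃ z ∈ P, μ (ball z r) ≤ (Cμ + Cμ ^ 2) * isoperimetricConst Cμ CP N * ENNReal.ofReal r *
      codimH μ (slab π φt {c} ∩ closedBall z (2 ^ N * r)) := by
  set A := slab π φt (Ioo c e)
  have hA : IsOpen A := isOpen_slab hπ.isOpenMap hφt isOpen_Ioo
  have hsep : ∀ W, Separates (slab π φt {c} ∪ slab π φt {e}) A W := by
    simpa only [frontier_Ioo (hcd.trans hde), insert_eq, slab_union] using
      separates_slab hπ hφt (Ioo c e)
  have hdisj : ∀ z ∈ P, z ∈ slab π φt {b, d} →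
      Disjoint (slab π φt {c} ∪ slab π φt {e}) (closedBall z (2 ^ N * r)) := fun z hz hzbd =>
    disjoint_union_left.2 ⟨disjoint_closedBall_of_forall_lt_dist (far_c z hzbd),
      disjoint_closedBall_of_forall_lt_dist (far_e z hz)⟩
  obtain ⟨x, hxP, hx⟩ := hPb
  obtain ⟨y, hyP, hy⟩ := hPd
  obtain ⟨z, hz, hle⟩ := hP.exists_measure_ball_le_codimH hd hN hA.measurableSet hr hrT hPc
    (fun z _ => hsep _)
    hxP (compl_slab_Ioo_mem_nhds_of_lt hπ.isOpenMap hφt hlift (hcd.trans hde).le hbc heb hx)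
    (hdisj x hxP (slab_mono (by simp) hx))
    hyP (hA.mem_nhds (slab_mono (singleton_subset_iff.2 (mem_Ioo.2 ⟨hcd, hde⟩)) hy))
    (hdisj y hyP (slab_mono (by simp) hy))
  refine ⟨z, hz, hle.trans (mul_le_mul_right (codimH_mono ?_) _)⟩
  rw [union_inter_distrib_right,
    (disjoint_closedBall_of_forall_lt_dist (far_e z hz)).inter_eq, union_empty]

lemma exists_mem_Icc_measure_ball_le_codimH_slab [BoundedSpace T] (hP : SupportsPoincare μ CP lP)
    (hd : IsDoubling μ Cμ) (hN : max lP lP⁻¹ ≤ 2 ^ N) (hπ : IsCoveringMap π)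
    (hφt : Continuous φt) (hlift : ∀ x, (φt x : UnitAddCircle) = φ (π x)) (hab : a < b)
    (hbc : b < c) (hcd : c < d) (hde : d < e) (hea : e < a + 1) (hR : 0 < R)
    (far_c : ∀ x ∈ slab π φt {b, d}, ∀ y ∈ slab π φt {c}, R < dist x y)
    (far_ae : ∀ x ∈ slab π φt {a, e}, ∀ y ∈ slab π φt {b, d}, R < dist x y) {γ : UPath T}
    (hstart : γ.start ∈ slab π φt {b}) (hfinish : γ.finish ∈ slab π φt {d})
    (hγ : γ.InSet (slab π φt (Ioo a e))) :
    ∃ t ∈ Icc γ.a γ.b, μ (ball (γ.toFun t) R) ≤ crossingConst Cμ CP N * ENNReal.ofReal R *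
      codimH μ (slab π φt {c} ∩ ball (γ.toFun t) R) := by
  obtain ⟨P, hPγ, hPc, hPsub, hPmem⟩ := exists_isPreconnected_subset_trace hπ hφt hlift hea hab
    (hbc.trans hcd).le hde hγ hstart hfinish
  have hRT : R < diam (univ : Set T) := by
    obtain ⟨x, -, hx⟩ := hPmem c ⟨hbc.le, hcd.le⟩
    exact (far_c _ (slab_mono (by simp) hstart) x hx).trans_le
      (dist_le_diam_of_mem (Bornology.IsBounded.all _) (mem_univ _) (mem_univ _))
  set r := R / 2 ^ (2 * N + 1) with hr_def
  have hrR : r ≤ R := div_le_self hR.le (one_le_pow₀ one_le_two)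
  have hlt : 2 ^ N * r < R / 2 ^ N := by
    rw [show 2 ^ N * r = R / 2 ^ N / 2 by rw [hr_def]; field_simp; ring]
    exact half_lt_self (by positivity)
  have hltR : 2 ^ N * r < R := hlt.trans_le (div_le_self hR.le (one_le_pow₀ one_le_two))
  obtain ⟨z, hz, hle⟩ := hP.exists_measure_ball_le_codimH_slab hd hN hπ hφt hlift hbc hcd hde
    (by linarith) (by positivity) (hrR.trans_lt hRT) hPc
    (hPmem b ⟨le_rfl, (hbc.trans hcd).le⟩) (hPmem d ⟨(hbc.trans hcd).le, le_rfl⟩)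
    (fun x hx y hy => hltR.trans (far_c x hx y hy))
    (fun x hx y hy => hlt.trans_le (hP.div_two_pow_le_dist_slab hd hN hπ hφt hlift hab
      (hbc.trans hcd) hde hea hR hRT far_ae (hPsub hx) (slab_mono (by simp) hy)))
  obtain ⟨t, ht, rfl⟩ := hPγ hz
  refine ⟨t, ht, ?_⟩
  calc μ (ball (γ.toFun t) R)
      ≤ Cμ ^ (2 * N + 1) * μ (ball (γ.toFun t) r) := hd.measure_ball_le_pow _ hR.le hRT _
    _ ≤ Cμ ^ (2 * N + 1) * ((Cμ + Cμ ^ 2) * isoperimetricConst Cμ CP N * ENNReal.ofReal R *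
          codimH μ (slab π φt {c} ∩ ball (γ.toFun t) R)) := by
        refine mul_le_mul_right (hle.trans ?_) _
        gcongr
        exact codimH_mono (inter_subset_inter_right _ (closedBall_subset_ball hltR))
    _ = _ := by rw [crossingConst]; ring

end SupportsPoincare

end Crossing

end Duality

open Duality in
theorem statement14_general.{u, v} (Cμ : ℝ≥0∞) (CP lP : ℝ) :
    ∃ C : ℝ≥0∞, 0 < C ∧ C < ⊤ ∧
      ∀ (T : Type u) [MetricSpace T] [MeasurableSpace T] [OpensMeasurableSpace T] [BoundedSpace T]
        (Tt : Type v) [TopologicalSpace Tt] (μ : Measure T) (π : Tt → T),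
        IsDoubling μ Cμ → SupportsPoincare μ CP lP → IsCoveringMap π →
        ∀ (φ : T → UnitAddCircle) (φt : Tt → ℝ), Continuous φt →
          (∀ x, (φt x : UnitAddCircle) = φ (π x)) →
          ∀ a b c d e : ℝ, a < b → b < c → c < d → d < e → e < a + 1 →
          ∀ R : ℝ, 0 < R →
            (∀ x ∈ slab π φt {b, d}, ∀ y ∈ slab π φt {c}, R < dist x y) →
            (∀ x ∈ slab π φt {a, e}, ∀ y ∈ slab π φt {b, d}, R < dist x y) →
            ∀ γ : UPath T, γ.start ∈ slab π φt {b} → γ.finish ∈ slab π φt {d} →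
              γ.InSet (slab π φt (Ioo a e)) →
              ∃ t ∈ Icc γ.a γ.b,
                C * (ENNReal.ofReal R)⁻¹ * μ (ball (γ.toFun t) R) ≤
                  codimH μ (slab π φt {c} ∩ ball (γ.toFun t) R) := by
  obtain ⟨N, hN⟩ := pow_unbounded_of_one_lt (max lP lP⁻¹) one_lt_two
  set K := crossingConst Cμ.toNNReal CP N + 1
  have hK : K ≠ ⊤ := by
    simp only [K, crossingConst, isoperimetricConst]
    finiteness
  refine ⟨K⁻¹, ENNReal.inv_pos.2 hK, ENNReal.inv_lt_top.2 (by simp [K]), ?_⟩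
  intro T _ _ _ _ Tt _ μ π hd hP hπ φ φt hφt hlift a b c d e hab hbc hcd hde hea R hR far_c far_ae
    γ hstart hfinish hγ
  obtain ⟨t, ht, hle⟩ := hP.exists_mem_Icc_measure_ball_le_codimH_slab hd.coe_toNNReal hN.le hπ hφt
    hlift hab hbc hcd hde hea hR far_c far_ae hstart hfinish hγ
  refine ⟨t, ht, ?_⟩
  rw [← ENNReal.mul_inv (.inr ENNReal.ofReal_ne_top) (.inl hK),
    ENNReal.inv_mul_le_iff (by simp [K, hR]) (by finiteness)]
  exact hle.trans (by gcongr; exact le_self_add)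

open Duality in
/-- **Corollary 4.7.** Every path of `Γ` carries a ball of radius `1/n` centered on it
in which the level set `S` has substantial codimension 1 Hausdorff measure. -/
theorem statement14 (Cμ : ℝ≥0∞) (CP lP : ℝ) :
    ∃ C : ℝ≥0∞, 0 < C ∧ C < ⊤ ∧
      ∀ (T : Type) [MetricSpace T] [MeasurableSpace T] [BorelSpace T] [CompactSpace T]
        (Tt : Type) [MetricSpace Tt]
        (μ : Measure T) (x₀ : T) (α₀ : Path x₀ x₀) (π : Tt → T) (τ : Tt → Tt),
        Standing μ Cμ CP lP x₀ α₀ → CoverSetup π → IsDeck π x₀ α₀ τ →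
        ∀ (φ : T → UnitAddCircle) (k : ℤ) (φt : Tt → ℝ),
          0 < k → HasDegree x₀ α₀ φ k → Continuous φt →
          (∀ x, ((φt x : ℝ) : UnitAddCircle) = φ (π x)) →
          ∀ δ : ℝ, 0 < δ →
            (∀ x ∈ π '' (φt ⁻¹' ({-(1/8), 1/8} : Set ℝ)),
              ∀ y ∈ π '' (φt ⁻¹' ({0} : Set ℝ)), δ ≤ dist x y) →
            (∀ x ∈ π '' (φt ⁻¹' ({-(1/4), 1/4} : Set ℝ)),
              ∀ y ∈ π '' (φt ⁻¹' ({-(1/8), 1/8} : Set ℝ)), δ ≤ dist x y) →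
            ∀ n : ℕ, 1 / δ < (n : ℝ) →
              ∀ γ : UPath T, γ.start ∈ π '' (φt ⁻¹' ({-(1/8)} : Set ℝ)) →
                γ.finish ∈ π '' (φt ⁻¹' ({1/8} : Set ℝ)) →
                γ.InSet (π '' (φt ⁻¹' Set.Ioo (-(1/4) : ℝ) (1/4))) →
                ∃ t ∈ Set.Icc γ.a γ.b,
                  C * (n : ℝ≥0∞) * μ (ball (γ.toFun t) (1 / (n : ℝ))) ≤
                    codimH μ (π '' (φt ⁻¹' ({0} : Set ℝ)) ∩
                      ball (γ.toFun t) (1 / (n : ℝ))) := by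
  obtain ⟨C, hC₀, hC, h⟩ := statement14_general Cμ CP lP
  refine ⟨C, hC₀, hC, ?_⟩
  intro T _ _ _ _ Tt _ μ x₀ α₀ π τ hT hπ _ φ k φt _ _ hφt hlift δ hδ hδ₁ hδ₂ n hn γ hs hf hin
  have hn₀ : (0 : ℝ) < n := (one_div_pos.2 hδ).trans hn
  have hlt : 1 / (n : ℝ) < δ := (one_div_lt hδ hn₀).1 hn
  obtain ⟨t, ht, hle⟩ := h T Tt μ π hT.1 hT.2.1 hπ.1 φ φt hφt hlift (-(1 / 4)) (-(1 / 8)) 0 (1 / 8)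
    (1 / 4) (by norm_num) (by norm_num) (by norm_num) (by norm_num) (by norm_num) (1 / n)
    (one_div_pos.2 hn₀) (fun x hx y hy => hlt.trans_le (hδ₁ x hx y hy))
    (fun x hx y hy => hlt.trans_le (hδ₂ x hx y hy)) γ hs hf hin
  refine ⟨t, ht, ?_⟩
  rwa [← ENNReal.ofReal_inv_of_pos (one_div_pos.2 hn₀), one_div, inv_inv, ENNReal.ofReal_natCast,
    ← one_div] at hle
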